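/- arXiv:2403.03912 — 3 statements merged into one kernel-verified Lean document; each statement's English description precedes it below -/
import Mathlib

section
/- As b → ∞ one has K(b,{b−1}) = b·log(b) − ζ(2)/(2b) − (3ζ(2)+ζ(3))/(3b²) + O(b^{−3}); that is, there exist constants C > 0 and B such that for every integer b ≥ B, |K(b,{b−1}) − b·log(b) + ζ(2)/(2b) + (3ζ(2)+ζ(3))/(3b²)| ≤ C/b³. -/
open MeasureTheory Real ENNReal

/-- The digamma function `ψ(x) = d/dx log Γ(x)`. -/
noncomputable def digamma (x : ℝ) : ℝ := deriv (fun y => Real.log (Real.Gamma y)) x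

/-- The Kempner sum `K(b,E)`: sum of reciprocals of positive integers whose
base-`b` digits all avoid the excluded set `E`. -/
noncomputable def kempnerSum (b : ℕ) (E : Finset ℕ) : ℝ :=
  ∑' n : ℕ, if n ≠ 0 ∧ ∀ d ∈ Nat.digits b n, d ∉ E then (n : ℝ)⁻¹ else 0

/-- The measure `μ_{b,E}` on `[0,1)`: the sum, over all finite strings of admissible
digits (digits `< b` not in `E`), of the weighted Dirac mass `b^{-l} δ_{n(X)/b^l}`. -/
noncomputable def kempnerMeasure (b : ℕ) (E : Finset ℕ) : Measure ℝ :=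
  Measure.sum (fun X : {l : List ℕ // ∀ d ∈ l, d < b ∧ d ∉ E} =>
    ((b : ℝ≥0∞) ^ X.1.length)⁻¹ •
      Measure.dirac (((Nat.ofDigits b X.1 : ℕ) : ℝ) / (b : ℝ) ^ X.1.length))

/-- `E₁ = E` if `0 ∉ E`, and `E₁ = (E ∪ {b}) \ {0}` if `0 ∈ E`. -/
def Eone (b : ℕ) (E : Finset ℕ) : Finset ℕ :=
  if 0 ∈ E then insert b (E.erase 0) else E

/-- `ζ(s) = ∑_{k ≥ 1} k⁻ˢ`. -/
noncomputable def zetaVal (s : ℕ) : ℝ := ∑' k : ℕ, (((k : ℝ) + 1) ^ s)⁻¹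

/-- `v_m(d) = ∫_{[0,1)} (d - x)^m dμ_{b,E}(x)`. -/
noncomputable def vMoment (b : ℕ) (E : Finset ℕ) (m : ℕ) (d : ℝ) : ℝ :=
  ∫ x in Set.Ico (0 : ℝ) 1, (d - x) ^ m ∂(kempnerMeasure b E)

/-!
Let `W x = ∑ (m + x)⁻¹`, over the `m > 0` whose digits are admissible. Splitting off the last digit
of `m` gives `W = F + T W`, where `F` is the sum over one-digit integers and the transfer operator
`T` has norm the density `1 - 1 / b` of admissible digits. So a bounded `G` with
`|F + T G - G| ≤ ε` on `[0, 1]` satisfies `|W 0 - G 0| ≤ b * ε`, and it suffices to exhibit `G` with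
`ε = O(b⁻⁴)`. With `H x = ψ(x + 1) + γ`, Gauss's multiplication formula for the digamma function
shows that `-H` has defect `log b + b⁻¹ * H (-(1 - x) / b)`. The Taylor expansion
`H z = ζ(2) z - ζ(3) z² + O(z³)` turns this, up to `O(b⁻⁴)`, into a polynomial defect, which a
quadratic polynomial cancels; the value of the corrected function at `0` is the claimed expansion.
-/

open Finset Filter Topology

theorem sum_range_mul_eq_sum_sum {M : Type*} [AddCommMonoid M] (f : ℕ → M) (b n : ℕ) :
    ∑ m ∈ range (b * n), f m = ∑ q ∈ range n, ∑ a ∈ range b, f (a + b * q) := by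
  induction n with
  | zero => simp
  | succ n ih =>
    rw [mul_add_one, sum_range_add, ih, sum_range_succ]
    simp only [add_comm]

section KempnerTransfer

variable {b : ℕ} {E : Finset ℕ} {x : ℝ}

/-- The summand of the shifted Kempner sum `∑ (m + x)⁻¹`, over the `m > 0` whose base-`b` digits
avoid `E`; the Kempner sum itself is the case `x = 0`. -/
noncomputable def kempnerTerm (b : ℕ) (E : Finset ℕ) (x : ℝ) (m : ℕ) : ℝ :=
  if m ≠ 0 ∧ ∀ d ∈ Nat.digits b m, d ∉ E then ((m : ℝ) + x)⁻¹ else 0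

/-- The part of the shifted Kempner sum that comes from the one-digit integers. -/
noncomputable def kempnerDigitSum (b : ℕ) (E : Finset ℕ) (x : ℝ) : ℝ :=
  ∑ a ∈ (range b \ E).erase 0, ((a : ℝ) + x)⁻¹

/-- The part of the shifted Kempner sum that comes from the integers with at most `l` digits. -/
noncomputable def kempnerPartialSum (b : ℕ) (E : Finset ℕ) (l : ℕ) (x : ℝ) : ℝ :=
  ∑ m ∈ range (b ^ l), kempnerTerm b E x m

/-- The transfer operator of the admissible digits: it appends a last digit to the integers over
which a shifted Kempner sum runs. -/
noncomputable def digitTransfer (b : ℕ) (E : Finset ℕ) : (ℝ → ℝ) →ₗ[ℝ] (ℝ → ℝ) where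
  toFun f x := (b : ℝ)⁻¹ * ∑ a ∈ range b \ E, f ((a + x) / b)
  map_add' f g := by
    ext x
    simp only [Pi.add_apply, sum_add_distrib, mul_add]
  map_smul' c f := by
    ext x
    simp only [Pi.smul_apply, smul_eq_mul, ← mul_sum, RingHom.id_apply, mul_left_comm]

theorem digitTransfer_apply (f : ℝ → ℝ) :
    digitTransfer b E f x = (b : ℝ)⁻¹ * ∑ a ∈ range b \ E, f ((a + x) / b) :=
  rfl

theorem kempnerTerm_nonneg (hx : 0 ≤ x) (m : ℕ) : 0 ≤ kempnerTerm b E x m := by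
  unfold kempnerTerm
  split_ifs <;> positivity

theorem kempnerTerm_add_mul_of_mem (hb : 1 < b) {a : ℕ} (hab : a < b) (ha : a ∈ E) (q : ℕ) :
    kempnerTerm b E x (a + b * q) = 0 := by
  refine if_neg fun ⟨_, havoid⟩ ↦ havoid a ?_ ha
  rw [Nat.digits_add b hb a q hab (by grind)]
  exact List.mem_cons_self

theorem kempnerTerm_add_mul_of_notMem (hb : 1 < b) {a : ℕ} (hab : a < b) (ha : a ∉ E) (q : ℕ) :
    kempnerTerm b E x (a + b * q) = (b : ℝ)⁻¹ * kempnerTerm b E ((a + x) / b) q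
      + if q = 0 then if a ≠ 0 then ((a : ℝ) + x)⁻¹ else 0 else 0 := by
  have hb0 : (b : ℝ) ≠ 0 := by positivity
  rcases eq_or_ne q 0 with rfl | hq
  · rcases eq_or_ne a 0 with rfl | ha0
    · simp [kempnerTerm]
    · simp [kempnerTerm, Nat.digits_of_lt b a ha0 hab, ha, ha0]
  · have hinv : (((a + b * q : ℕ) : ℝ) + x)⁻¹ = (b : ℝ)⁻¹ * ((q : ℝ) + (a + x) / b)⁻¹ := by
      rw [← mul_inv, mul_add, mul_div_cancel₀ _ hb0]
      push_cast
      ring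
    simp only [kempnerTerm, Nat.digits_add b hb a q hab (.inr hq), List.forall_mem_cons, hinv]
    simp [ha, hq, Nat.ne_of_gt (Nat.zero_lt_of_lt hb)]

theorem kempnerPartialSum_succ (hb : 1 < b) (l : ℕ) :
    kempnerPartialSum b E (l + 1) x
      = kempnerDigitSum b E x + digitTransfer b E (kempnerPartialSum b E l) x := by
  have hsplit (q : ℕ) : ∑ a ∈ range b, kempnerTerm b E x (a + b * q)
      = ∑ a ∈ range b \ E, ((b : ℝ)⁻¹ * kempnerTerm b E ((a + x) / b) q
        + if q = 0 then if a ≠ 0 then ((a : ℝ) + x)⁻¹ else 0 else 0) := by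
    refine (sum_subset_zero_on_sdiff sdiff_subset (fun a ha ↦ ?_) fun a ha ↦ ?_).symm
    · exact kempnerTerm_add_mul_of_mem hb (by grind) (by grind) q
    · exact (kempnerTerm_add_mul_of_notMem hb (by grind) (by grind) q).symm
  have hpos : 0 < b ^ l := by positivity
  rw [kempnerPartialSum, pow_succ', sum_range_mul_eq_sum_sum]
  simp_rw [hsplit]
  rw [sum_comm]
  simp only [sum_add_distrib, sum_ite_eq', mem_range, hpos, if_true, ← mul_sum, ← sum_filter,
    filter_ne']
  exact add_comm _ _

/-- The proportion of the base-`b` digits that avoid `E`. -/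
noncomputable def digitDensity (b : ℕ) (E : Finset ℕ) : ℝ :=
  #(range b \ E) / b

theorem digitDensity_nonneg : 0 ≤ digitDensity b E := by
  unfold digitDensity
  positivity

theorem add_div_mem_Icc {a : ℕ} (ha : a < b) (hx : x ∈ Set.Icc (0 : ℝ) 1) :
    (a + x) / b ∈ Set.Icc (0 : ℝ) 1 := by
  have hab : (a : ℝ) + 1 ≤ b := by exact_mod_cast ha
  have hx0 := hx.1
  exact ⟨by positivity, div_le_one_of_le₀ (by linarith [hx.2]) (by positivity)⟩

theorem abs_digitTransfer_le {f : ℝ → ℝ} {c : ℝ} (hf : ∀ x ∈ Set.Icc (0 : ℝ) 1, |f x| ≤ c)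
    (hx : x ∈ Set.Icc (0 : ℝ) 1) : |digitTransfer b E f x| ≤ digitDensity b E * c := by
  rw [digitTransfer_apply, abs_mul, abs_of_nonneg (by positivity), digitDensity,
    div_mul_eq_mul_div, inv_mul_eq_div]
  gcongr
  calc |∑ a ∈ range b \ E, f ((a + x) / b)|
      ≤ ∑ a ∈ range b \ E, |f ((a + x) / b)| := abs_sum_le_sum_abs _ _
    _ ≤ #(range b \ E) • c := sum_le_card_nsmul _ _ _ fun a ha ↦
        hf _ (add_div_mem_Icc (mem_range.1 (sdiff_subset ha)) hx)
    _ = #(range b \ E) * c := nsmul_eq_mul _ _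

variable {G : ℝ → ℝ} {ε M : ℝ}

theorem abs_kempnerPartialSum_sub_le (hb : 1 < b) (hρ : digitDensity b E < 1)
    (hM : ∀ x ∈ Set.Icc (0 : ℝ) 1, |G x| ≤ M)
    (hε : ∀ x ∈ Set.Icc (0 : ℝ) 1,
      |kempnerDigitSum b E x + digitTransfer b E G x - G x| ≤ ε) (l : ℕ) :
    ∀ x ∈ Set.Icc (0 : ℝ) 1, |kempnerPartialSum b E l x - G x|
      ≤ ε / (1 - digitDensity b E) + digitDensity b E ^ l * M := by
  set ρ := digitDensity b E
  induction l with
  | zero =>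
    intro x hx
    have hε0 : 0 ≤ ε / (1 - ρ) :=
      div_nonneg ((abs_nonneg _).trans (hε x hx)) (sub_nonneg.2 hρ.le)
    simpa [kempnerPartialSum, kempnerTerm] using add_le_add hε0 (hM x hx)
  | succ l ih =>
    intro x hx
    have hsub := congrFun (map_sub (digitTransfer b E) (kempnerPartialSum b E l) G) x
    rw [Pi.sub_apply] at hsub
    calc |kempnerPartialSum b E (l + 1) x - G x|
        = |(kempnerDigitSum b E x + digitTransfer b E G x - G x)
            + digitTransfer b E (kempnerPartialSum b E l - G) x| := by
          rw [kempnerPartialSum_succ hb, hsub]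
          ring_nf
      _ ≤ ε + ρ * (ε / (1 - ρ) + ρ ^ l * M) :=
          (abs_add_le _ _).trans (add_le_add (hε x hx) (abs_digitTransfer_le ih hx))
      _ = ε / (1 - ρ) + ρ ^ (l + 1) * M := by
          have := sub_ne_zero.2 hρ.ne'
          field_simp
          ring

theorem abs_kempnerSum_sub_le (hb : 1 < b) (hρ : digitDensity b E < 1)
    (hM : ∀ x ∈ Set.Icc (0 : ℝ) 1, |G x| ≤ M)
    (hε : ∀ x ∈ Set.Icc (0 : ℝ) 1,
      |kempnerDigitSum b E x + digitTransfer b E G x - G x| ≤ ε) :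
    |kempnerSum b E - G 0| ≤ ε / (1 - digitDensity b E) := by
  set ρ := digitDensity b E
  have h0 : (0 : ℝ) ∈ Set.Icc (0 : ℝ) 1 := by simp
  have hbound (l : ℕ) := abs_kempnerPartialSum_sub_le hb hρ hM hε l 0 h0
  have hρ0 : 0 ≤ ρ := digitDensity_nonneg
  have hM0 : 0 ≤ M := (abs_nonneg _).trans (hM 0 h0)
  have hsum : Summable (kempnerTerm b E 0) := by
    refine summable_of_sum_range_le (c := G 0 + (ε / (1 - ρ) + M))
      (kempnerTerm_nonneg le_rfl) fun n ↦ ?_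
    calc ∑ m ∈ range n, kempnerTerm b E 0 m
        ≤ kempnerPartialSum b E n 0 :=
          sum_le_sum_of_subset_of_nonneg (range_mono (Nat.lt_pow_self hb).le)
            fun m _ _ ↦ kempnerTerm_nonneg le_rfl m
      _ ≤ G 0 + (ε / (1 - ρ) + ρ ^ n * M) := by linarith [le_of_abs_le (hbound n)]
      _ ≤ G 0 + (ε / (1 - ρ) + M) := by
          gcongr
          exact mul_le_of_le_one_left hM0 (pow_le_one₀ hρ0 hρ.le)
  have hpartial : Tendsto (fun l ↦ kempnerPartialSum b E l 0) atTop (𝓝 (kempnerSum b E)) := by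
    have hK : kempnerSum b E = ∑' m, kempnerTerm b E 0 m := by
      simp only [kempnerSum, kempnerTerm, add_zero]
    rw [hK]
    exact hsum.hasSum.tendsto_sum_nat.comp (tendsto_pow_atTop_atTop_of_one_lt hb)
  have hgeom : Tendsto (fun l ↦ ε / (1 - ρ) + ρ ^ l * M) atTop (𝓝 (ε / (1 - ρ))) := by
    simpa using ((tendsto_pow_atTop_nhds_zero_of_lt_one hρ0 hρ).mul_const M).const_add _
  exact le_of_tendsto_of_tendsto' (hpartial.sub_const _).abs hgeom hbound

end KempnerTransfer

section ZetaVal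

variable {s : ℕ}

theorem hasSum_zetaVal (hs : 1 < s) : HasSum (fun k : ℕ ↦ (((k : ℝ) + 1) ^ s)⁻¹) (zetaVal s) := by
  have hsum := (summable_nat_add_iff 1).2 (Real.summable_nat_pow_inv.2 hs)
  push_cast at hsum
  exact hsum.hasSum

theorem zetaVal_pos (hs : 1 < s) : 0 < zetaVal s :=
  (hasSum_zetaVal hs).summable.tsum_pos (fun _ ↦ by positivity) 0 (by positivity)

end ZetaVal

section RealHarmonic

variable {x : ℝ}

/-- The harmonic numbers extended to a real argument `x > -1`, by Euler's series; in terms of the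
digamma function this is `ψ(x + 1) + γ`. -/
noncomputable def realHarmonic (x : ℝ) : ℝ :=
  ∑' k : ℕ, (((k : ℝ) + 1)⁻¹ - ((k : ℝ) + 1 + x)⁻¹)

theorem min_one_mul_le_add {t : ℝ} (ht : 1 ≤ t) : min 1 (1 + x) * t ≤ t + x := by
  rcases le_total 0 x with hx | hx
  · rw [min_eq_left (by linarith)]
    linarith
  · rw [min_eq_right (by linarith)]
    nlinarith

theorem norm_inv_sub_inv_add_le (hx : -1 < x) (k : ℕ) :
    ‖((k : ℝ) + 1)⁻¹ - ((k : ℝ) + 1 + x)⁻¹‖ ≤ |x| / min 1 (1 + x) * (((k : ℝ) + 1) ^ 2)⁻¹ := by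
  have hmin : 0 < min 1 (1 + x) := lt_min one_pos (by linarith)
  have hk : 1 ≤ (k : ℝ) + 1 := by simp
  have hkx : 0 < (k : ℝ) + 1 + x := by linarith
  calc ‖((k : ℝ) + 1)⁻¹ - ((k : ℝ) + 1 + x)⁻¹‖
      = |x| / (((k : ℝ) + 1 + x) * (k + 1)) := by
        rw [inv_sub_inv (by positivity) hkx.ne', Real.norm_eq_abs, abs_div, add_sub_cancel_left,
          abs_of_pos (a := _ * _) (by positivity), mul_comm]
    _ ≤ |x| / (min 1 (1 + x) * (k + 1) * (k + 1)) := by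
        gcongr
        exact min_one_mul_le_add hk
    _ = |x| / min 1 (1 + x) * (((k : ℝ) + 1) ^ 2)⁻¹ := by
        field_simp

theorem hasSum_realHarmonic (hx : -1 < x) :
    HasSum (fun k : ℕ ↦ ((k : ℝ) + 1)⁻¹ - ((k : ℝ) + 1 + x)⁻¹) (realHarmonic x) :=
  (Summable.of_norm_bounded ((hasSum_zetaVal one_lt_two).summable.mul_left _)
    (norm_inv_sub_inv_add_le hx)).hasSum

theorem abs_realHarmonic_le (hx : -1 < x) :
    |realHarmonic x| ≤ |x| / min 1 (1 + x) * zetaVal 2 :=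
  tsum_of_norm_bounded ((hasSum_zetaVal one_lt_two).mul_left _) (norm_inv_sub_inv_add_le hx)

@[simp]
theorem realHarmonic_zero : realHarmonic 0 = 0 := by
  simp [realHarmonic]

theorem realHarmonic_add_one (hx : -1 < x) :
    realHarmonic (x + 1) = realHarmonic x + (x + 1)⁻¹ := by
  have hseries := ((hasSum_realHarmonic (x := x + 1) (by linarith)).sub
    (hasSum_realHarmonic hx)).tendsto_sum_nat
  have htelescope (N : ℕ) : ∑ k ∈ range N, (((k : ℝ) + 1)⁻¹ - (k + 1 + (x + 1))⁻¹
      - (((k : ℝ) + 1)⁻¹ - (k + 1 + x)⁻¹)) = (x + 1)⁻¹ - ((N : ℝ) + (x + 1))⁻¹ := by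
    have h := sum_range_sub' (fun k : ℕ ↦ ((k : ℝ) + (x + 1))⁻¹) N
    rw [Nat.cast_zero, zero_add] at h
    rw [← h]
    refine sum_congr rfl fun k _ ↦ ?_
    push_cast
    ring_nf
  have hzero : Tendsto (fun N : ℕ ↦ ((N : ℝ) + (x + 1))⁻¹) atTop (𝓝 0) :=
    tendsto_inv_atTop_zero.comp
      (tendsto_atTop_add_const_right _ _ tendsto_natCast_atTop_atTop)
  have hdiff := tendsto_nhds_unique hseries
    ((hzero.const_sub (x + 1)⁻¹).congr fun N ↦ (htelescope N).symm)
  linarith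

theorem realHarmonic_add_natCast (hx : -1 < x) (n : ℕ) :
    realHarmonic (x + n) = realHarmonic x + ∑ k ∈ range n, ((k : ℝ) + 1 + x)⁻¹ := by
  induction n with
  | zero => simp
  | succ n ih =>
    have hxn : -1 < x + n := by linarith [n.cast_nonneg (α := ℝ)]
    rw [Nat.cast_succ, ← add_assoc, realHarmonic_add_one hxn, ih, sum_range_succ, add_assoc,
      add_rotate x]

theorem tendsto_harmonic_sub_harmonic_mul {b : ℕ} (hb : b ≠ 0) :
    Tendsto (fun N : ℕ ↦ (harmonic N : ℝ) - harmonic (b * N)) atTop (𝓝 (-Real.log b)) := by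
  have hmul : Tendsto (fun N : ℕ ↦ b * N) atTop atTop :=
    tendsto_id.const_mul_atTop' (by positivity)
  have hlim := (tendsto_harmonic_sub_log.sub
    (tendsto_harmonic_sub_log.comp hmul)).sub_const (Real.log b)
  rw [sub_self, zero_sub] at hlim
  refine hlim.congr' ?_
  filter_upwards [eventually_ne_atTop 0] with N hN
  have hlog : Real.log ((b * N : ℕ) : ℝ) = Real.log b + Real.log N := by
    rw [Nat.cast_mul, Real.log_mul (by positivity) (by positivity)]
  rw [Function.comp_apply, hlog]
  ring

theorem sum_range_inv_add_one (n : ℕ) : ∑ k ∈ range n, ((k : ℝ) + 1)⁻¹ = harmonic n := by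
  simp [harmonic]

/-- Gauss's multiplication formula for the digamma function, in terms of `realHarmonic`. -/
theorem inv_mul_sum_realHarmonic {b : ℕ} (hb : b ≠ 0) (hx : -(b : ℝ) < x) :
    (b : ℝ)⁻¹ * ∑ a ∈ range b, realHarmonic ((a + x) / b)
      = realHarmonic (x + (b - 1)) - Real.log b := by
  have hb0 : (0 : ℝ) < b := by positivity
  have harg (a : ℕ) : -1 < (a + x) / b := by
    rw [lt_div_iff₀ hb0]
    linarith [a.cast_nonneg (α := ℝ)]
  have hlhs := (tendsto_finsetSum (range b) fun a _ ↦
    (hasSum_realHarmonic (harg a)).tendsto_sum_nat).const_mul (b : ℝ)⁻¹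
  have hrhs := ((hasSum_realHarmonic (x := x + (b - 1)) (by linarith)).tendsto_sum_nat.comp
    (tendsto_id.const_mul_atTop' (Nat.pos_of_ne_zero hb))).add
    (tendsto_harmonic_sub_harmonic_mul hb)
  refine tendsto_nhds_unique hlhs (hrhs.congr fun N ↦ ?_)
  have hterm (a k : ℕ) :
      (b : ℝ)⁻¹ * ((k : ℝ) + 1 + (a + x) / b)⁻¹
        = (((a + b * k : ℕ) : ℝ) + 1 + (x + (b - 1)))⁻¹ := by
    rw [← mul_inv]
    congr 1
    push_cast
    field_simp
    ring
  simp only [Function.comp_apply, id_eq, sum_sub_distrib, sum_range_inv_add_one, sum_const,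
    card_range, nsmul_eq_mul, mul_sub, mul_sum, hterm, sum_range_mul_eq_sum_sum _ b N]
  rw [sum_comm (s := range b), inv_mul_cancel_left₀ (by positivity)]
  ring

theorem abs_realHarmonic_sub_le (hx : |x| < 1) :
    |realHarmonic x - (zetaVal 2 * x - zetaVal 3 * x ^ 2)| ≤ zetaVal 3 * |x| ^ 3 / (1 - |x|) := by
  have hx1 : -1 < x := (abs_lt.1 hx).1
  have hzeta2 := hasSum_zetaVal (s := 2) (by norm_num)
  have hzeta3 := hasSum_zetaVal (s := 3) (by norm_num)
  have hsum := (hasSum_realHarmonic hx1).sub ((hzeta2.mul_right x).sub (hzeta3.mul_right (x ^ 2)))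
  have hterm (k : ℕ) : ‖((k : ℝ) + 1)⁻¹ - ((k : ℝ) + 1 + x)⁻¹
        - ((((k : ℝ) + 1) ^ 2)⁻¹ * x - (((k : ℝ) + 1) ^ 3)⁻¹ * x ^ 2)‖
      ≤ (((k : ℝ) + 1) ^ 3)⁻¹ * (|x| ^ 3 / (1 - |x|)) := by
    have hkx : 1 - |x| ≤ (k : ℝ) + 1 + x := by linarith [neg_abs_le x, k.cast_nonneg (α := ℝ)]
    have hkx0 : 0 < (k : ℝ) + 1 + x := by linarith
    have hrem : ((k : ℝ) + 1)⁻¹ - ((k : ℝ) + 1 + x)⁻¹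
          - ((((k : ℝ) + 1) ^ 2)⁻¹ * x - (((k : ℝ) + 1) ^ 3)⁻¹ * x ^ 2)
        = (((k : ℝ) + 1) ^ 3)⁻¹ * (x ^ 3 / ((k : ℝ) + 1 + x)) := by
      field_simp
      ring
    rw [hrem, norm_mul, norm_div, norm_pow, Real.norm_eq_abs x,
      Real.norm_of_nonneg (r := (_ : ℝ)⁻¹) (by positivity), Real.norm_of_nonneg hkx0.le]
    gcongr
  rw [← hsum.tsum_eq, mul_div_assoc]
  exact tsum_of_norm_bounded (hzeta3.mul_right _) hterm

end RealHarmonic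

section TopDigit

variable {b : ℕ} {x : ℝ}

theorem range_sdiff_singleton_pred (b : ℕ) : range b \ {b - 1} = range (b - 1) := by
  grind

theorem digitDensity_pred (hb : b ≠ 0) : digitDensity b {b - 1} = 1 - (b : ℝ)⁻¹ := by
  have hb0 : (b : ℝ) ≠ 0 := by positivity
  rw [digitDensity, range_sdiff_singleton_pred, card_range, Nat.cast_pred (by positivity)]
  field_simp

theorem kempnerDigitSum_pred (hb : 2 ≤ b) (hx : -1 < x) :
    kempnerDigitSum b {b - 1} x = realHarmonic (x + (b - 2)) - realHarmonic x := by
  obtain ⟨n, rfl⟩ := Nat.exists_eq_add_of_le' hb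
  have hcast : x + (((n + 2 : ℕ) : ℝ) - 2) = x + n := by
    push_cast
    ring
  rw [kempnerDigitSum, range_sdiff_singleton_pred, sum_erase_eq_sub (by simp),
    Nat.add_succ_sub_one, sum_range_succ', add_sub_cancel_right, hcast,
    realHarmonic_add_natCast hx, add_sub_cancel_left]
  push_cast
  rfl

theorem digitTransfer_pred_apply (hb : b ≠ 0) (f : ℝ → ℝ) :
    digitTransfer b {b - 1} f x
      = (b : ℝ)⁻¹ * ∑ a ∈ range b, f ((a + x) / b) - (b : ℝ)⁻¹ * f (1 - (1 - x) / b) := by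
  obtain ⟨n, rfl⟩ := Nat.exists_eq_succ_of_ne_zero hb
  have htop : 1 - (1 - x) / (n.succ : ℝ) = (n + x) / n.succ := by
    push_cast
    field_simp
    ring
  rw [digitTransfer_apply, range_sdiff_singleton_pred, htop, sum_range_succ]
  simp [mul_add]

theorem kempnerDigitSum_sub_digitTransfer_realHarmonic (hb : 2 ≤ b) (hx : -1 < x) :
    kempnerDigitSum b {b - 1} x - digitTransfer b {b - 1} realHarmonic x + realHarmonic x
      = Real.log b + (b : ℝ)⁻¹ * realHarmonic (-((1 - x) / b)) := by
  have hb2 : (2 : ℝ) ≤ b := by exact_mod_cast hb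
  have harg : (1 - x) / (b : ℝ) < 1 := by
    rw [div_lt_one (by linarith)]
    linarith
  have htop := realHarmonic_add_one (x := x + (b - 2)) (by linarith)
  have hone := realHarmonic_add_one (x := -((1 - x) / b)) (by linarith)
  have hinv : (b : ℝ)⁻¹ * (-((1 - x) / b) + 1)⁻¹ = (x + (b - 2) + 1)⁻¹ := by
    rw [← mul_inv]
    congr 1
    field_simp
    ring
  rw [kempnerDigitSum_pred hb hx, digitTransfer_pred_apply (by lia),
    inv_mul_sum_realHarmonic (by lia) (by linarith), sub_eq_neg_add 1, hone, mul_add, hinv,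
    show x + ((b : ℝ) - 1) = x + (b - 2) + 1 by ring, htop]
  ring

theorem digitTransfer_quadratic (hb : b ≠ 0) (A B C : ℝ) :
    digitTransfer b {b - 1} (fun x ↦ A + B * (1 - x) + C * (1 - x) ^ 2) x
      = (1 - (b : ℝ)⁻¹) * (A + B * (1 / 2 + (1 - x) / b)
        + C * (1 / 3 - (b : ℝ)⁻¹ / 6 + (1 - x) / b + ((1 - x) / b) ^ 2)) := by
  have hb0 : (b : ℝ) ≠ 0 := by positivity
  have hsum (n : ℕ) (r s : ℝ) :
      ∑ a ∈ range n, (A + B * (r - a * s) + C * (r - a * s) ^ 2)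
        = n * (A + B * r + C * r ^ 2) - s * (B + 2 * C * r) * (n * (n - 1) / 2)
          + C * s ^ 2 * (n * (n - 1) * (2 * n - 1) / 6) := by
    induction n with
    | zero => simp
    | succ n ih =>
      rw [sum_range_succ, ih]
      push_cast
      ring
  have harg (a : ℕ) : 1 - (a + x) / b = 1 - x / b - a * (b : ℝ)⁻¹ := by
    ring
  rw [digitTransfer_apply, range_sdiff_singleton_pred]
  simp only [harg]
  rw [hsum, Nat.cast_pred (by positivity)]
  field_simp
  ring

/-- An approximate fixed point of the affine transfer equation for the excluded digit `b - 1`.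
`-realHarmonic` alone solves it up to `log b + b⁻¹ * realHarmonic (-(1 - x) / b)`; the quadratic
polynomial cancels the second-order Taylor polynomial of this defect up to `O(b⁻⁴)`. -/
noncomputable def kempnerTopDigitApprox (b : ℕ) : ℝ → ℝ :=
  (fun x ↦ b * Real.log b - zetaVal 2 / (2 * b) - zetaVal 3 / (3 * (b : ℝ) ^ 2)
    + -(zetaVal 2 * (1 / (b : ℝ) ^ 2 + 1 / (b : ℝ) ^ 3)) * (1 - x)
    + -(zetaVal 3 / (b : ℝ) ^ 3) * (1 - x) ^ 2) - realHarmonic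

theorem kempnerTopDigitApprox_zero :
    kempnerTopDigitApprox b 0 = b * Real.log b - zetaVal 2 / (2 * b)
      - (3 * zetaVal 2 + zetaVal 3) / (3 * (b : ℝ) ^ 2)
      - (zetaVal 2 + zetaVal 3) / (b : ℝ) ^ 3 := by
  simp only [kempnerTopDigitApprox, Pi.sub_apply, realHarmonic_zero]
  ring

theorem exists_abs_kempnerTopDigitApprox_le (b : ℕ) :
    ∃ M, ∀ x ∈ Set.Icc (0 : ℝ) 1, |kempnerTopDigitApprox b x| ≤ M := by
  let p (x : ℝ) := kempnerTopDigitApprox b x + realHarmonic x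
  have hp : Continuous p := by
    simp only [p, kempnerTopDigitApprox, Pi.sub_apply, sub_add_cancel]
    fun_prop
  obtain ⟨M, hM⟩ := isCompact_Icc.exists_bound_of_continuousOn (hp.continuousOn (s := Set.Icc 0 1))
  refine ⟨M + zetaVal 2, fun x hx ↦ ?_⟩
  have hzeta2 := zetaVal_pos one_lt_two
  have hharm : |realHarmonic x| ≤ zetaVal 2 := by
    have h := abs_realHarmonic_le (x := x) (by linarith [hx.1])
    rw [min_eq_left (by linarith [hx.1]), div_one, abs_of_nonneg hx.1] at h
    exact h.trans (mul_le_of_le_one_left hzeta2.le hx.2)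
  calc |kempnerTopDigitApprox b x| = |p x - realHarmonic x| := by
        simp only [p, add_sub_cancel_right]
    _ ≤ |p x| + |realHarmonic x| := abs_sub _ _
    _ ≤ M + zetaVal 2 := add_le_add (hM x hx) hharm

theorem kempnerTopDigitApprox_defect_eq (hb : 2 ≤ b) (hx : -1 < x) :
    kempnerDigitSum b {b - 1} x + digitTransfer b {b - 1} (kempnerTopDigitApprox b) x
        - kempnerTopDigitApprox b x
      = ((b : ℝ)⁻¹) ^ 4 * (zetaVal 2 * (1 / 2 + (1 - x) / b)
          + zetaVal 3 * (1 / 2 - (b : ℝ)⁻¹ / 6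
            - (1 - (b : ℝ)⁻¹) * (1 - x) * (1 + (1 - x) / b)))
        + (b : ℝ)⁻¹ * (realHarmonic (-((1 - x) / b))
          - (zetaVal 2 * -((1 - x) / b) - zetaVal 3 * (-((1 - x) / b)) ^ 2)) := by
  have hb0 : (b : ℝ) ≠ 0 := by positivity
  have hharm := kempnerDigitSum_sub_digitTransfer_realHarmonic hb hx
  have hdigit : kempnerDigitSum b {b - 1} x = Real.log b
      + (b : ℝ)⁻¹ * realHarmonic (-((1 - x) / b)) + digitTransfer b {b - 1} realHarmonic x
      - realHarmonic x := by linarith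
  rw [kempnerTopDigitApprox, map_sub, Pi.sub_apply, Pi.sub_apply, digitTransfer_quadratic (by lia),
    hdigit]
  field_simp
  ring

theorem abs_realHarmonic_neg_sub_le {z : ℝ} (hz0 : 0 ≤ z) (hz : z ≤ 1 / 2) :
    |realHarmonic (-z) - (zetaVal 2 * -z - zetaVal 3 * (-z) ^ 2)| ≤ 2 * zetaVal 3 * z ^ 3 := by
  have hzeta3 := zetaVal_pos (s := 3) (by norm_num)
  have habs : |-z| = z := by rw [abs_neg, abs_of_nonneg hz0]
  calc |realHarmonic (-z) - (zetaVal 2 * -z - zetaVal 3 * (-z) ^ 2)|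
      ≤ zetaVal 3 * z ^ 3 / (1 - z) := by
        simpa only [habs] using abs_realHarmonic_sub_le (x := -z) (by linarith)
    _ ≤ zetaVal 3 * z ^ 3 / (1 / 2) := by
        gcongr
        linarith
    _ = 2 * zetaVal 3 * z ^ 3 := by ring

theorem abs_zetaVal_three_coeff_le {β y : ℝ} (hβ0 : 0 ≤ β) (hβ1 : β ≤ 1) (hy0 : 0 ≤ y)
    (hy1 : y ≤ 1) : |1 / 2 - β / 6 - (1 - β) * y * (1 + y * β)| ≤ 1 := by
  have hβ : 0 ≤ 1 - β := sub_nonneg.2 hβ1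
  have hlower : 0 ≤ (1 - β) * y * (1 + y * β) :=
    mul_nonneg (mul_nonneg hβ hy0) (by positivity)
  have hupper : (1 - β) * y * (1 + y * β) ≤ (1 - β) * 1 * (1 + 1 * β) := by gcongr
  rw [abs_le]
  constructor <;> nlinarith

theorem abs_kempnerTopDigitApprox_defect_le (hb : 2 ≤ b) (hx : x ∈ Set.Icc (0 : ℝ) 1) :
    |kempnerDigitSum b {b - 1} x + digitTransfer b {b - 1} (kempnerTopDigitApprox b) x
        - kempnerTopDigitApprox b x| ≤ (zetaVal 2 + 3 * zetaVal 3) / (b : ℝ) ^ 4 := by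
  obtain ⟨hx0, hx1⟩ := hx
  have hzeta2 := zetaVal_pos (s := 2) (by norm_num)
  have hzeta3 := zetaVal_pos (s := 3) (by norm_num)
  have hβ0 : 0 ≤ (b : ℝ)⁻¹ := by positivity
  have hβ : (b : ℝ)⁻¹ ≤ 1 / 2 := by
    rw [one_div]
    exact inv_anti₀ two_pos (by exact_mod_cast hb)
  have hdefect := kempnerTopDigitApprox_defect_eq hb (x := x) (by linarith)
  rw [div_eq_mul_inv (1 - x) (b : ℝ)] at hdefect
  rw [hdefect, div_eq_mul_inv _ ((b : ℝ) ^ 4), ← inv_pow]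
  generalize (b : ℝ)⁻¹ = β at hβ0 hβ ⊢
  have hz0 : 0 ≤ (1 - x) * β := mul_nonneg (by linarith) hβ0
  have hzβ : (1 - x) * β ≤ β := mul_le_of_le_one_left hβ0 (by linarith)
  have hcoeff2 : |1 / 2 + (1 - x) * β| ≤ 1 := by
    rw [abs_le]
    constructor <;> linarith
  have hcoeff3 : |1 / 2 - β / 6 - (1 - β) * (1 - x) * (1 + (1 - x) * β)| ≤ 1 :=
    abs_zetaVal_three_coeff_le hβ0 (by linarith) (by linarith) (by linarith)
  have htaylor : |realHarmonic (-((1 - x) * β))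
      - (zetaVal 2 * -((1 - x) * β) - zetaVal 3 * (-((1 - x) * β)) ^ 2)|
      ≤ 2 * zetaVal 3 * β ^ 3 :=
    (abs_realHarmonic_neg_sub_le hz0 (hzβ.trans hβ)).trans (by gcongr)
  calc _ ≤ β ^ 4 * (zetaVal 2 * 1 + zetaVal 3 * 1) + β * (2 * zetaVal 3 * β ^ 3) := by
        refine (abs_add_le _ _).trans ?_
        rw [abs_mul, abs_mul, abs_of_nonneg hβ0, abs_of_nonneg (pow_nonneg hβ0 4)]
        gcongr
        refine (abs_add_le _ _).trans ?_
        rw [abs_mul, abs_mul, abs_of_pos hzeta2, abs_of_pos hzeta3]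
        gcongr
    _ = (zetaVal 2 + 3 * zetaVal 3) * β ^ 4 := by ring

theorem abs_kempnerSum_top_digit_sub_le (hb : 2 ≤ b) :
    |kempnerSum b {b - 1} - (b : ℝ) * Real.log b + zetaVal 2 / (2 * b)
      + (3 * zetaVal 2 + zetaVal 3) / (3 * (b : ℝ) ^ 2)|
      ≤ (2 * zetaVal 2 + 4 * zetaVal 3) / (b : ℝ) ^ 3 := by
  have hb0 : (b : ℝ) ≠ 0 := by positivity
  obtain ⟨M, hM⟩ := exists_abs_kempnerTopDigitApprox_le b
  have hdensity := digitDensity_pred (b := b) (by lia)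
  have hdensity_lt : digitDensity b {b - 1} < 1 := by
    rw [hdensity, sub_lt_self_iff]
    positivity
  have happrox := abs_kempnerSum_sub_le (by lia) hdensity_lt hM
    fun x hx ↦ abs_kempnerTopDigitApprox_defect_le hb hx
  have hgeom : (zetaVal 2 + 3 * zetaVal 3) / (b : ℝ) ^ 4 / (1 - digitDensity b {b - 1})
      = (zetaVal 2 + 3 * zetaVal 3) / (b : ℝ) ^ 3 := by
    rw [hdensity, sub_sub_self]
    field_simp
  have hzeta2 := zetaVal_pos (s := 2) (by norm_num)
  have hzeta3 := zetaVal_pos (s := 3) (by norm_num)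
  calc _ = |(kempnerSum b {b - 1} - kempnerTopDigitApprox b 0)
        - (zetaVal 2 + zetaVal 3) / (b : ℝ) ^ 3| := by
        rw [kempnerTopDigitApprox_zero]
        ring_nf
    _ ≤ (zetaVal 2 + 3 * zetaVal 3) / (b : ℝ) ^ 3 + (zetaVal 2 + zetaVal 3) / (b : ℝ) ^ 3 := by
        refine (abs_sub _ _).trans (add_le_add (happrox.trans_eq hgeom) ?_)
        rw [abs_of_nonneg (by positivity)]
    _ = (2 * zetaVal 2 + 4 * zetaVal 3) / (b : ℝ) ^ 3 := by ring

end TopDigit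

theorem kempner_top_digit_asymptotic :
    ∃ C > (0 : ℝ), ∃ B : ℕ, ∀ b : ℕ, B ≤ b →
      |kempnerSum b {b - 1} - (b : ℝ) * Real.log b + zetaVal 2 / (2 * b)
        + (3 * zetaVal 2 + zetaVal 3) / (3 * (b : ℝ) ^ 2)| ≤ C / (b : ℝ) ^ 3 := by
  have hzeta2 := zetaVal_pos (s := 2) (by norm_num)
  have hzeta3 := zetaVal_pos (s := 3) (by norm_num)
  exact ⟨2 * zetaVal 2 + 4 * zetaVal 3, by positivity, 2,
    fun b hb ↦ abs_kempnerSum_top_digit_sub_le hb⟩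
end

section
/- There exist real sequences (a_m)_{m≥1} and (a'_m)_{m≥1} such that for every integer M ≥ 1, as b → ∞, K(b,{0}) = b·log(b) + Σ_{m=1}^M a_m·b^{−m} + O(b^{−M−1}) and K(b,{b−1}) = b·log(b) + Σ_{m=1}^M a'_m·b^{−m} + O(b^{−M−1}); i.e., both K(b,{0}) − b·log(b) and K(b,{b−1}) − b·log(b) admit asymptotic expansions in descending powers of b to all orders. -/
open MeasureTheory Real ENNReal

/-!
Let `A` be the set of positive integers without the base-`b` digit `e`. Grouping the integers by
their last digit and telescoping each block shows, for every function `h`, that `∑_A Δh` plus the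
differences of `h` over the missing unit intervals `[b * n + e, b * n + e + 1]` equals
`h 1 - h b + ∑_A Δ(h (b * ·))`, where `Δh n = h n - h (n + 1)`.

For `h n = n⁻ʲ` the last sum is `b⁻ʲ ∑_A Δh`. When `e` is `0` or `b - 1`, each missing interval has
an endpoint `b * m`, and a Taylor expansion there turns its contribution into power sums over the
integers `m`, with a factor `b⁻ʲ⁻¹`. The identity thus gives the expansion of `∑_A Δh` to one order
more than that of its inputs. Any function with an expansion in powers of `n⁻¹` starting at `n⁻²`
is, up to fast decay, a combination of the differences `Δ(n⁻ʲ)`, and fast decaying functions do not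
see the integers missing from `A`, which are at least `b - 1`. By induction all these sums over `A`
have expansions to all orders.

For `h = -log` the sums over `A` cancel, and the identity says that `log b` is the sum of the
differences of `log` over the missing intervals; its Taylor expansion relates `∑_A n⁻¹` to
`b * log b` and to the sums treated above.
-/

open Asymptotics Filter Topology

section PolyExpansion

variable {α 𝕜 : Type*} [NormedField 𝕜] {l : Filter α} {u F G : α → 𝕜} {M N : ℕ}

/-- `F` agrees with a polynomial in the small quantity `u` up to `O(u ^ N)` along `l`: it has an
asymptotic expansion in powers of `u` to order `N`. The polynomial may depend on `N`, and only its
coefficients of degree `< N` are determined by `F`. -/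
def HasPolyExpansion (l : Filter α) (u : α → 𝕜) (N : ℕ) (F : α → 𝕜) : Prop :=
  ∃ P : Polynomial 𝕜, (fun a => F a - P.eval (u a)) =O[l] fun a => u a ^ N

theorem isBigO_pow_of_tendsto_zero (hu : Tendsto u l (𝓝 0)) (hMN : M ≤ N) :
    (fun a => u a ^ N) =O[l] fun a => u a ^ M := by
  have hbounded : (fun a => u a ^ (N - M)) =O[l] fun _ => (1 : 𝕜) :=
    (hu.pow (N - M)).isBigO_one 𝕜
  simpa [← pow_add, Nat.add_sub_cancel' hMN] using (isBigO_refl (fun a => u a ^ M) l).mul hbounded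

theorem isBigO_eval_pow_of_X_pow_dvd (hu : Tendsto u l (𝓝 0)) {Q : Polynomial 𝕜}
    (hQ : Polynomial.X ^ N ∣ Q) : (fun a => Q.eval (u a)) =O[l] fun a => u a ^ N := by
  obtain ⟨R, rfl⟩ := hQ
  have hR : (fun a => R.eval (u a)) =O[l] fun _ => (1 : 𝕜) :=
    ((R.continuous.tendsto 0).comp hu).isBigO_one 𝕜
  simpa using (isBigO_refl (fun a => u a ^ N) l).mul hR

theorem X_pow_dvd_of_isBigO_eval_pow [l.NeBot] (hu : Tendsto u l (𝓝[≠] 0)) {Q : Polynomial 𝕜}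
    (hQ : (fun a => Q.eval (u a)) =O[l] fun a => u a ^ N) : Polynomial.X ^ N ∣ Q := by
  obtain ⟨hu0, hne⟩ := tendsto_nhdsWithin_iff.mp hu
  induction N generalizing Q with
  | zero => simp
  | succ N ih =>
    have hlim : Tendsto (fun a => Q.eval (u a)) l (𝓝 (Q.eval 0)) :=
      (Q.continuous.tendsto 0).comp hu0
    have hzero : Q.eval 0 = 0 :=
      tendsto_nhds_unique hlim (hQ.trans_tendsto (by simpa using hu0.pow (N + 1)))
    obtain ⟨R, rfl⟩ := Polynomial.X_dvd_iff.mpr (Q.coeff_zero_eq_eval_zero.trans hzero)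
    rw [pow_succ']
    refine mul_dvd_mul_left _ (ih ?_)
    refine ((isBigO_refl (fun a => (u a)⁻¹) l).mul hQ).congr' ?_ ?_
    · filter_upwards [hne] with a ha
      simp [inv_mul_cancel_left₀ ha]
    · filter_upwards [hne] with a ha
      rw [pow_succ', inv_mul_cancel_left₀ ha]

namespace HasPolyExpansion

theorem mono (hu : Tendsto u l (𝓝 0)) (hF : HasPolyExpansion l u N F) (hMN : M ≤ N) :
    HasPolyExpansion l u M F :=
  hF.imp fun _ hP => hP.trans (isBigO_pow_of_tendsto_zero hu hMN)

theorem of_isBigO (hF : F =O[l] fun a => u a ^ N) : HasPolyExpansion l u N F :=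
  ⟨0, by simpa using hF⟩

theorem congr (hF : HasPolyExpansion l u N F) (hFG : F =ᶠ[l] G) : HasPolyExpansion l u N G :=
  hF.imp fun _ hP => hP.congr' (hFG.mono fun a ha => by simp only [ha]) EventuallyEq.rfl

theorem const (N : ℕ) (c : 𝕜) : HasPolyExpansion l u N fun _ => c :=
  ⟨Polynomial.C c, by simpa using isBigO_zero _ _⟩

theorem add (hF : HasPolyExpansion l u N F) (hG : HasPolyExpansion l u N G) :
    HasPolyExpansion l u N fun a => F a + G a := by
  obtain ⟨P, hP⟩ := hF
  obtain ⟨Q, hQ⟩ := hG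
  refine ⟨P + Q, (hP.add hQ).congr_left fun a => ?_⟩
  rw [Polynomial.eval_add]
  ring

theorem const_mul (c : 𝕜) (hF : HasPolyExpansion l u N F) :
    HasPolyExpansion l u N fun a => c * F a := by
  obtain ⟨P, hP⟩ := hF
  refine ⟨Polynomial.C c * P, (hP.const_mul_left c).congr_left fun a => ?_⟩
  rw [Polynomial.eval_mul, Polynomial.eval_C]
  ring

theorem sub (hF : HasPolyExpansion l u N F) (hG : HasPolyExpansion l u N G) :
    HasPolyExpansion l u N fun a => F a - G a := by
  simpa [sub_eq_add_neg] using hF.add (hG.const_mul (-1))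

theorem sum {ι : Type*} {s : Finset ι} {f : ι → α → 𝕜}
    (hf : ∀ i ∈ s, HasPolyExpansion l u N (f i)) :
    HasPolyExpansion l u N fun a => ∑ i ∈ s, f i a := by
  choose! P hP using hf
  refine ⟨∑ i ∈ s, P i, (IsBigO.sum hP).congr_left fun a => ?_⟩
  simp only [Finset.sum_apply, Polynomial.eval_finsetSum, Finset.sum_sub_distrib]

theorem pow_mul (k : ℕ) (hF : HasPolyExpansion l u N F) :
    HasPolyExpansion l u (N + k) fun a => u a ^ k * F a := by
  obtain ⟨P, hP⟩ := hF
  refine ⟨Polynomial.X ^ k * P, ?_⟩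
  refine ((isBigO_refl (fun a => u a ^ k) l).mul hP).congr (fun a => ?_) fun a => ?_
  · simp [mul_sub]
  · rw [pow_add, mul_comm]

theorem exists_coeff [l.NeBot] (hu : Tendsto u l (𝓝[≠] 0))
    (hF : ∀ N, HasPolyExpansion l u N F) :
    ∃ c : ℕ → 𝕜, ∀ M,
      (fun a => F a - ∑ m ∈ Finset.range M, c m * u a ^ m) =O[l] fun a => u a ^ M := by
  have hu0 := tendsto_nhds_of_tendsto_nhdsWithin hu
  choose P hP using hF
  have coeff_eq {m M : ℕ} (hm : m < M) : (P M).coeff m = (P (m + 1)).coeff m := by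
    have hdvd : Polynomial.X ^ (m + 1) ∣ P M - P (m + 1) := by
      refine X_pow_dvd_of_isBigO_eval_pow hu ?_
      refine ((hP (m + 1)).sub ((hP M).trans (isBigO_pow_of_tendsto_zero hu0 hm))).congr_left
        fun a => ?_
      rw [Polynomial.eval_sub]
      ring
    exact sub_eq_zero.mp <| by
      simpa using Polynomial.X_pow_dvd_iff.mp hdvd m m.lt_succ_self
  let c : ℕ → 𝕜 := fun m => (P (m + 1)).coeff m
  refine ⟨c, fun M => ?_⟩
  let T : Polynomial 𝕜 := PowerSeries.trunc M (PowerSeries.mk c)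
  have eval_T (x : 𝕜) : T.eval x = ∑ m ∈ Finset.range M, c m * x ^ m := by
    simpa using PowerSeries.eval₂_trunc_eq_sum_range x (RingHom.id 𝕜) M (PowerSeries.mk c)
  have hdvd : Polynomial.X ^ M ∣ P M - T := Polynomial.X_pow_dvd_iff.mpr fun m hm => by
    simp [T, c, PowerSeries.coeff_trunc, hm, coeff_eq hm]
  refine ((hP M).add (isBigO_eval_pow_of_X_pow_dvd hu0 hdvd)).congr_left fun a => ?_
  rw [Polynomial.eval_sub, eval_T]
  ring

end HasPolyExpansion

end PolyExpansion

section Analytic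

variable {𝕜 : Type*} [NontriviallyNormedField 𝕜]

theorem exists_polynomial_isBigO_sub_eval {g : 𝕜 → 𝕜} (hg : AnalyticAt 𝕜 g 0) (N : ℕ) :
    ∃ P : Polynomial 𝕜, (fun x => g x - P.eval x) =O[𝓝 0] fun x => x ^ N := by
  obtain ⟨p, hp⟩ := hg
  refine ⟨∑ i ∈ Finset.range N, Polynomial.C (p.coeff i) * Polynomial.X ^ i, ?_⟩
  have hp' := (hp.isBigO_sub_partialSum_pow N).trans
    (isBigO_of_le (g := fun x : 𝕜 => x ^ N) _ fun x => by simp)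
  refine hp'.congr_left fun x => ?_
  simp only [zero_add, FormalMultilinearSeries.partialSum, Polynomial.eval_finsetSum,
    FormalMultilinearSeries.apply_eq_pow_smul_coeff, Polynomial.eval_mul, Polynomial.eval_C,
    Polynomial.eval_pow, Polynomial.eval_X, smul_eq_mul, mul_comm]

theorem exists_analyticAt_eq_mul {f : 𝕜 → 𝕜} {f' : 𝕜} (hf : AnalyticAt 𝕜 f 0) (hf0 : f 0 = 0)
    (hf' : HasDerivAt f f' 0) :
    ∃ g : 𝕜 → 𝕜, AnalyticAt 𝕜 g 0 ∧ g 0 = f' ∧ ∀ x, f x = x * g x := by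
  refine ⟨dslope f 0, ?_, (dslope_same f 0).trans hf'.deriv, fun x => ?_⟩
  · obtain ⟨p, hp⟩ := hf
    exact hp.has_fpower_series_dslope_fslope.analyticAt
  · simpa [hf0] using (sub_smul_dslope f 0 x).symm

theorem exists_analyticAt_one_sub_inv_one_add_pow (j : ℕ) :
    ∃ φ : 𝕜 → 𝕜, AnalyticAt 𝕜 φ 0 ∧ φ 0 = j ∧ ∀ x, 1 - ((1 + x)⁻¹) ^ j = x * φ x := by
  refine exists_analyticAt_eq_mul ?_ (by simp) ?_
  · have hinv : AnalyticAt 𝕜 (fun x : 𝕜 => (1 + x)⁻¹) 0 :=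
      (analyticAt_const.add analyticAt_id).inv (by simp)
    exact analyticAt_const.sub (hinv.pow j)
  · have hinv : HasDerivAt (fun x : 𝕜 => (1 + x)⁻¹) (-1) 0 := by
      simpa using ((hasDerivAt_id (0 : 𝕜)).const_add 1).fun_inv (by simp)
    simpa using (hinv.fun_pow j).const_sub 1

theorem exists_analyticAt_log_one_add_eq :
    ∃ φ : ℝ → ℝ, AnalyticAt ℝ φ 0 ∧ ∀ x, Real.log (1 + x) = x + x ^ 2 * φ x := by
  have hlog : AnalyticAt ℝ (fun x : ℝ => Real.log (1 + x)) 0 :=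
    (analyticAt_const.add analyticAt_id).log (by simp)
  have hlog' : HasDerivAt (fun x : ℝ => Real.log (1 + x)) 1 0 := by
    simpa using ((hasDerivAt_id (0 : ℝ)).const_add 1).log (by simp)
  obtain ⟨ψ, hψ, hψ0, hψ_mul⟩ := exists_analyticAt_eq_mul (hlog.sub analyticAt_id) (by simp)
    (hlog'.sub (hasDerivAt_id' (0 : ℝ)))
  obtain ⟨φ, hφ, -, hφ_mul⟩ := exists_analyticAt_eq_mul hψ (by simpa using hψ0)
    hψ.differentiableAt.hasDerivAt
  refine ⟨φ, hφ, fun x => sub_eq_iff_eq_add'.mp ?_⟩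
  rw [sq, mul_assoc, ← hφ_mul, ← hψ_mul]
  rfl

end Analytic

section SubsetSums

theorem summable_nat_inv_sq : Summable fun n : ℕ => ((n : ℝ)⁻¹) ^ 2 := by
  simp [inv_pow]

theorem summable_subtype_of_abs_le_inv_sq {X : Set ℕ} {f : ℕ → ℝ} {K : ℝ}
    (hf : ∀ n ∈ X, |f n| ≤ K * ((n : ℝ)⁻¹) ^ 2) : Summable fun n : X => f n :=
  .of_norm_bounded (g := fun n : X => K * ((n : ℝ)⁻¹) ^ 2)
    ((summable_nat_inv_sq.subtype X).mul_left K) fun n => hf n n.2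

theorem abs_tsum_subtype_le_of_abs_le_inv_sq {X : Set ℕ} {f : ℕ → ℝ} {K : ℝ} (hK : 0 ≤ K)
    (hf : ∀ n ∈ X, |f n| ≤ K * ((n : ℝ)⁻¹) ^ 2) :
    |∑' n : X, f n| ≤ K * ∑' n : ℕ, ((n : ℝ)⁻¹) ^ 2 := by
  have hsum : Summable fun n : X => ((n : ℝ)⁻¹) ^ 2 := summable_nat_inv_sq.subtype X
  calc |∑' n : X, f n| ≤ ∑' n : X, K * ((n : ℝ)⁻¹) ^ 2 :=
        tsum_of_norm_bounded (f := fun n : X => f n) (hsum.mul_left K).hasSum fun n => hf n n.2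
    _ = K * ∑' n : X, ((n : ℝ)⁻¹) ^ 2 := tsum_mul_left
    _ ≤ K * ∑' n : ℕ, ((n : ℝ)⁻¹) ^ 2 := by
        gcongr
        exact summable_nat_inv_sq.tsum_subtype_le _ X fun n => by positivity

theorem inv_pow_le_inv_sq {k : ℕ} (hk : 2 ≤ k) (n : ℕ) : ((n : ℝ)⁻¹) ^ k ≤ ((n : ℝ)⁻¹) ^ 2 :=
  pow_le_pow_of_le_one (by positivity) n.cast_inv_le_one hk

theorem summable_subtype_inv_pow (X : Set ℕ) {k : ℕ} (hk : 2 ≤ k) :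
    Summable fun n : X => ((n : ℝ)⁻¹) ^ k :=
  (Summable.of_nonneg_of_le (fun n : ℕ => by positivity) (inv_pow_le_inv_sq hk)
    summable_nat_inv_sq).subtype X

variable {α : Type*} {l : Filter α} {u : α → ℝ} {X : α → Set ℕ} {k N : ℕ}

theorem exists_eventually_abs_inv_pow_mul_comp_le (hu : Tendsto u l (𝓝 0)) (hk : 2 ≤ k)
    {ψ : ℝ → ℝ} (hψ : ψ =O[𝓝 0] fun x => x ^ N) :
    ∃ C : ℝ, 0 < C ∧ ∀ᶠ a in l, ∀ m : ℕ,
      |((m : ℝ)⁻¹) ^ k * ψ (u a * (m : ℝ)⁻¹)| ≤ C * |u a| ^ N * ((m : ℝ)⁻¹) ^ 2 := by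
  obtain ⟨C, hC, hψC⟩ := hψ.exists_pos
  obtain ⟨r, hr, hball⟩ := Metric.eventually_nhds_iff.mp hψC.bound
  refine ⟨C, hC, ?_⟩
  filter_upwards [hu.eventually (Metric.ball_mem_nhds 0 hr)] with a ha m
  have hx : |u a * (m : ℝ)⁻¹| ≤ |u a| := by
    rw [abs_mul, abs_of_nonneg (by positivity : 0 ≤ (m : ℝ)⁻¹)]
    exact mul_le_of_le_one_right (abs_nonneg _) m.cast_inv_le_one
  have hψx : |ψ (u a * (m : ℝ)⁻¹)| ≤ C * |u a| ^ N := by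
    refine (hball ?_).trans ?_
    · rw [dist_zero_right]
      exact hx.trans_lt (by simpa using ha)
    · rw [norm_pow, Real.norm_eq_abs]
      gcongr
  rw [abs_mul, abs_of_nonneg (by positivity), mul_comm]
  exact mul_le_mul hψx (inv_pow_le_inv_sq hk m) (by positivity) (by positivity)

theorem HasPolyExpansion.tsum_inv_pow_mul_eval (hu : Tendsto u l (𝓝 0)) (hk : 2 ≤ k)
    (hX : ∀ i ≥ k, HasPolyExpansion l u N fun a => ∑' m : X a, ((m : ℝ)⁻¹) ^ i)
    (P : Polynomial ℝ) :
    HasPolyExpansion l u N fun a => ∑' m : X a, ((m : ℝ)⁻¹) ^ k * P.eval (u a * (m : ℝ)⁻¹) := by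
  have hsum : HasPolyExpansion l u N fun a => ∑ i ∈ Finset.range (P.natDegree + 1),
      P.coeff i * (u a ^ i * ∑' m : X a, ((m : ℝ)⁻¹) ^ (k + i)) :=
    .sum fun i _ => .const_mul _ <| ((hX (k + i) (by omega)).pow_mul i).mono hu (by omega)
  refine hsum.congr (.of_forall fun a => ?_)
  have hterm (m : X a) : ((m : ℝ)⁻¹) ^ k * P.eval (u a * (m : ℝ)⁻¹) =
      ∑ i ∈ Finset.range (P.natDegree + 1), P.coeff i * (u a ^ i * ((m : ℝ)⁻¹) ^ (k + i)) := by
    rw [Polynomial.eval_eq_sum_range, Finset.mul_sum]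
    exact Finset.sum_congr rfl fun i _ => by ring
  simp only [hterm]
  rw [Summable.tsum_finsetSum fun i _ =>
    ((summable_subtype_inv_pow (X a) (by omega)).mul_left _).mul_left _]
  simp only [tsum_mul_left]

theorem HasPolyExpansion.tsum_inv_pow_mul_comp (hu : Tendsto u l (𝓝 0)) (hk : 2 ≤ k)
    (hX : ∀ i ≥ k, HasPolyExpansion l u N fun a => ∑' m : X a, ((m : ℝ)⁻¹) ^ i)
    {φ : ℝ → ℝ} (hφ : AnalyticAt ℝ φ 0) :
    HasPolyExpansion l u N fun a => ∑' m : X a, ((m : ℝ)⁻¹) ^ k * φ (u a * (m : ℝ)⁻¹) := by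
  obtain ⟨P, hP⟩ := exists_polynomial_isBigO_sub_eval hφ N
  obtain ⟨C, hC, hbound⟩ := exists_eventually_abs_inv_pow_mul_comp_le hu hk hP
  obtain ⟨C₁, -, hbound₁⟩ := exists_eventually_abs_inv_pow_mul_comp_le (N := 0) hu hk
    (ψ := fun x => P.eval x) (by simpa using (P.continuous.tendsto 0).isBigO_one ℝ)
  have hremainder : HasPolyExpansion l u N fun a => ∑' m : X a,
      ((m : ℝ)⁻¹) ^ k * (φ (u a * (m : ℝ)⁻¹) - P.eval (u a * (m : ℝ)⁻¹)) := by
    refine .of_isBigO (.of_bound (C * ∑' n : ℕ, ((n : ℝ)⁻¹) ^ 2) ?_)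
    filter_upwards [hbound] with a ha
    rw [norm_pow, Real.norm_eq_abs, Real.norm_eq_abs, mul_right_comm]
    exact abs_tsum_subtype_le_of_abs_le_inv_sq (by positivity) fun m _ => ha m
  refine (hremainder.add (.tsum_inv_pow_mul_eval hu hk hX P)).congr ?_
  filter_upwards [hbound, hbound₁] with a ha ha₁
  rw [← (summable_subtype_of_abs_le_inv_sq fun m _ => ha m).tsum_add
    (summable_subtype_of_abs_le_inv_sq fun m _ => ha₁ m)]
  exact tsum_congr fun m => by ring

end SubsetSums

section AnalyticDecay

/-- `F b` has an asymptotic expansion in descending powers of `b`, up to `O(b⁻ᴺ)`, as `b → ∞`. -/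
abbrev HasInvExpansion (N : ℕ) (F : ℕ → ℝ) : Prop :=
  HasPolyExpansion atTop (fun b : ℕ => (b : ℝ)⁻¹) N F

/-- `f n = n⁻ᵏ g(n⁻¹)` for all large `n`, with `g` analytic at `0`. The value `g 0` may vanish, so
this is a lower bound on the rate of decay of `f`. -/
def HasAnalyticDecay (k : ℕ) (f : ℕ → ℝ) : Prop :=
  ∃ g : ℝ → ℝ, AnalyticAt ℝ g 0 ∧ ∀ᶠ n : ℕ in atTop, f n = ((n : ℝ)⁻¹) ^ k * g ((n : ℝ)⁻¹)

/-- The backward difference `n⁻ʲ - (n + 1)⁻ʲ`, of exact order `n⁻ʲ⁻¹` when `j ≠ 0`. -/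
noncomputable def invPowDiff (j n : ℕ) : ℝ :=
  ((n : ℝ)⁻¹) ^ j - (((n + 1 : ℕ) : ℝ)⁻¹) ^ j

theorem exists_analyticAt_invPowDiff_eq (j : ℕ) :
    ∃ φ : ℝ → ℝ, AnalyticAt ℝ φ 0 ∧ φ 0 = j ∧
      ∀ n : ℕ, n ≠ 0 → invPowDiff j n = ((n : ℝ)⁻¹) ^ (j + 1) * φ ((n : ℝ)⁻¹) := by
  obtain ⟨φ, hφ, hφ0, hφ_mul⟩ := exists_analyticAt_one_sub_inv_one_add_pow (𝕜 := ℝ) j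
  refine ⟨φ, hφ, hφ0, fun n hn => ?_⟩
  have hsucc : ((n + 1 : ℕ) : ℝ)⁻¹ = (n : ℝ)⁻¹ * (1 + (n : ℝ)⁻¹)⁻¹ := by
    push_cast
    field_simp
  rw [invPowDiff, hsucc, mul_pow, pow_succ, mul_assoc, ← hφ_mul]
  ring

theorem hasAnalyticDecay_invPowDiff (j : ℕ) : HasAnalyticDecay (j + 1) (invPowDiff j) := by
  obtain ⟨φ, hφ, -, hφ_eq⟩ := exists_analyticAt_invPowDiff_eq j
  exact ⟨φ, hφ, (eventually_ne_atTop 0).mono hφ_eq⟩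

theorem hasAnalyticDecay_inv_add_pow (i d : ℕ) :
    HasAnalyticDecay i fun n => (((n + d : ℕ) : ℝ)⁻¹) ^ i := by
  have hinv : AnalyticAt ℝ (fun x : ℝ => (1 + d * x)⁻¹) 0 :=
    (analyticAt_const.add (analyticAt_const.mul analyticAt_id)).inv (by simp)
  refine ⟨_, hinv.pow i, ?_⟩
  filter_upwards [eventually_ne_atTop 0] with n hn
  rw [Pi.pow_apply, ← mul_pow]
  congr 1
  push_cast
  field_simp

namespace HasAnalyticDecay

variable {k : ℕ} {f : ℕ → ℝ}

theorem isBigO (hf : HasAnalyticDecay k f) : f =O[atTop] fun n : ℕ => ((n : ℝ)⁻¹) ^ k := by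
  obtain ⟨g, hg, hfg⟩ := hf
  have hg_bdd : (fun n : ℕ => g ((n : ℝ)⁻¹)) =O[atTop] fun _ => (1 : ℝ) :=
    (hg.continuousAt.tendsto.comp tendsto_inv_atTop_nhds_zero_nat).isBigO_one ℝ
  exact ((isBigO_refl (fun n : ℕ => ((n : ℝ)⁻¹) ^ k) atTop).mul hg_bdd).congr'
    (hfg.mono fun _ hn => hn.symm) (.of_forall fun n => mul_one _)

theorem summable (hf : HasAnalyticDecay k f) (hk : 2 ≤ k) : Summable f :=
  summable_of_isBigO_nat summable_nat_inv_sq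
    (hf.isBigO.trans (isBigO_pow_of_tendsto_zero tendsto_inv_atTop_nhds_zero_nat hk))

theorem exists_sub_const_mul_invPowDiff {j : ℕ} (hj : j ≠ 0) (hf : HasAnalyticDecay (j + 1) f) :
    ∃ c : ℝ, HasAnalyticDecay (j + 2) fun n => f n - c * invPowDiff j n := by
  obtain ⟨g, hg, hfg⟩ := hf
  obtain ⟨φ, hφ, hφ0, hφ_eq⟩ := exists_analyticAt_invPowDiff_eq j
  have hdiff : AnalyticAt ℝ (fun x => g x - g 0 / j * φ x) 0 := hg.sub (analyticAt_const.mul hφ)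
  obtain ⟨ψ, hψ, -, hψ_mul⟩ := exists_analyticAt_eq_mul hdiff (by simp [hφ0, hj])
    hdiff.differentiableAt.hasDerivAt
  refine ⟨g 0 / j, ψ, hψ, ?_⟩
  filter_upwards [hfg, eventually_ne_atTop 0] with n hn hn0
  rw [hn, hφ_eq n hn0, pow_succ _ (j + 1), mul_assoc, ← hψ_mul]
  ring

end HasAnalyticDecay

end AnalyticDecay

section CofiniteFamilies

variable {X : ℕ → Set ℕ}

theorem isBigO_tsum_of_forall_mem_le_succ {k : ℕ} {f : ℕ → ℝ}
    (hf : f =O[atTop] fun n : ℕ => ((n : ℝ)⁻¹) ^ (k + 2)) (hX : ∀ b, ∀ n ∈ X b, b ≤ n + 1) :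
    (fun b => ∑' n : X b, f n) =O[atTop] fun b : ℕ => ((b : ℝ)⁻¹) ^ k := by
  obtain ⟨C, hC, hfC⟩ := hf.exists_pos
  obtain ⟨n₀, hn₀⟩ := eventually_atTop.mp hfC.bound
  refine .of_bound (C * 2 ^ k * ∑' n : ℕ, ((n : ℝ)⁻¹) ^ 2) ?_
  filter_upwards [eventually_ge_atTop (n₀ + 2)] with b hb
  rw [norm_of_nonneg (by positivity : (0 : ℝ) ≤ ((b : ℝ)⁻¹) ^ k), mul_right_comm]
  refine abs_tsum_subtype_le_of_abs_le_inv_sq (by positivity) fun n hn => ?_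
  have hbn : b ≤ n + 1 := hX b n hn
  have hb0 : (0 : ℝ) < b := by exact_mod_cast (by omega : 0 < b)
  have hn0 : (0 : ℝ) < n := by exact_mod_cast (by omega : 0 < n)
  have hinv : (n : ℝ)⁻¹ ≤ 2 * (b : ℝ)⁻¹ := by
    rw [← div_eq_mul_inv, inv_le_comm₀ hn0 (by positivity), inv_div, div_le_iff₀ two_pos]
    exact_mod_cast (by omega : b ≤ n * 2)
  calc |f n| ≤ C * ((n : ℝ)⁻¹) ^ (k + 2) := by simpa using hn₀ n (by omega)
    _ = C * ((n : ℝ)⁻¹) ^ k * ((n : ℝ)⁻¹) ^ 2 := by ring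
    _ ≤ C * (2 * (b : ℝ)⁻¹) ^ k * ((n : ℝ)⁻¹) ^ 2 := by gcongr
    _ = C * 2 ^ k * ((b : ℝ)⁻¹) ^ k * ((n : ℝ)⁻¹) ^ 2 := by ring

theorem hasInvExpansion_tsum_of_isBigO (hX0 : ∀ b, 0 ∉ X b)
    (hX : ∀ b, Set.Ico 1 (b - 1) ⊆ X b) {f : ℕ → ℝ} {k : ℕ}
    (hf : f =O[atTop] fun n : ℕ => ((n : ℝ)⁻¹) ^ (k + 2)) :
    HasInvExpansion k fun b => ∑' n : X b, f n := by
  have hf_summable : Summable f := summable_of_isBigO_nat summable_nat_inv_sq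
    (hf.trans (isBigO_pow_of_tendsto_zero tendsto_inv_atTop_nhds_zero_nat (by omega)))
  have hmissing : ∀ b, ∀ n ∈ ({0}ᶜ \ X b : Set ℕ), b ≤ n + 1 := by
    intro b n ⟨hn0, hnX⟩
    by_contra! hlt
    exact hnX (hX b ⟨Nat.one_le_iff_ne_zero.mpr hn0, by omega⟩)
  refine ((HasPolyExpansion.const k (∑' n : ({0}ᶜ : Set ℕ), f n)).sub
    (.of_isBigO (isBigO_tsum_of_forall_mem_le_succ hf hmissing))).congr (.of_forall fun b => ?_)
  have hunion : X b ∪ ({0}ᶜ \ X b) = {0}ᶜ :=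
    Set.union_sdiff_cancel fun n hn => by rintro rfl; exact hX0 b hn
  rw [sub_eq_iff_eq_add, ← (hf_summable.subtype _).tsum_union_disjoint Set.disjoint_sdiff_right
    (hf_summable.subtype _), hunion]

theorem hasInvExpansion_tsum_of_invPowDiff (hX0 : ∀ b, 0 ∉ X b)
    (hX : ∀ b, Set.Ico 1 (b - 1) ⊆ X b) {N : ℕ}
    (hdiff : ∀ j ≠ 0, HasInvExpansion N fun b => ∑' n : X b, invPowDiff j n)
    {k : ℕ} (hk : 2 ≤ k) {f : ℕ → ℝ} (hf : HasAnalyticDecay k f) :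
    HasInvExpansion N fun b => ∑' n : X b, f n := by
  induction hd : N + 2 - k generalizing k f with
  | zero =>
    obtain ⟨i, rfl⟩ := Nat.exists_eq_add_of_le' hk
    exact (hasInvExpansion_tsum_of_isBigO hX0 hX hf.isBigO).mono
      tendsto_inv_atTop_nhds_zero_nat (by omega)
  | succ d ih =>
    obtain ⟨j, rfl⟩ : ∃ j, k = j + 1 := ⟨k - 1, by omega⟩
    obtain ⟨c, hc⟩ := hf.exists_sub_const_mul_invPowDiff (by omega)
    refine ((ih (by omega) hc (by omega)).add ((hdiff j (by omega)).const_mul c)).congr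
      (.of_forall fun b => ?_)
    have hc_summable : Summable fun n : X b => f n - c * invPowDiff j n :=
      (hc.summable (by omega)).subtype (X b)
    have hdiff_summable : Summable fun n : X b => invPowDiff j n :=
      ((hasAnalyticDecay_invPowDiff j).summable (by omega)).subtype (X b)
    beta_reduce
    rw [← tsum_mul_left, ← hc_summable.tsum_add (hdiff_summable.mul_left c)]
    simp only [sub_add_cancel]

end CofiniteFamilies

section DigitAvoidance

variable {b e : ℕ}

/-- The positive integers whose base-`b` digits all differ from `e`. -/
def avoiders (b e : ℕ) : Set ℕ :=
  {n | n ≠ 0 ∧ ∀ d ∈ Nat.digits b n, d ≠ e}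

/-- The prefixes `n` without digit `e` for which `b * n + e` is positive, hence a missing element
of `avoiders b e`. This is `avoiders b 0` when `e = 0`, and contains the empty prefix `n = 0`
otherwise. -/
def gapPrefixes (b e : ℕ) : Set ℕ :=
  {n | b * n + e ≠ 0 ∧ ∀ d ∈ Nat.digits b n, d ≠ e}

theorem mul_add_mem_avoiders_iff (hb : 1 < b) {n d : ℕ} (hd : d < b) :
    b * n + d ∈ avoiders b e ↔ (b * n + d ≠ 0 ∧ ∀ c ∈ Nat.digits b n, c ≠ e) ∧ d ≠ e := by
  by_cases h0 : b * n + d = 0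
  · simp [avoiders, h0]
  · have hdn : d ≠ 0 ∨ n ≠ 0 := by
      by_contra! h
      simp [h.1, h.2] at h0
    simp only [avoiders, Set.mem_ofPred_eq, add_comm _ d, Nat.digits_add b hb d n hd hdn,
      List.forall_mem_cons]
    tauto

variable {M : Type*} [AddCommGroup M] (h : ℕ → M)

theorem sum_indicator_avoiders_block (hb : 1 < b) (he : e < b) (n : ℕ) :
    ∑ d ∈ Finset.range b, (avoiders b e).indicator (fun m => h m - h (m + 1)) (b * n + d) +
        (gapPrefixes b e).indicator (fun m => h (b * m + e) - h (b * m + e + 1)) n =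
      (if n = 0 then h 1 - h b else 0) +
        (avoiders b e).indicator (fun m => h (b * m) - h (b * (m + 1))) n := by
  classical
  let Δ (m : ℕ) : M := if m ≠ 0 ∧ ∀ c ∈ Nat.digits b n, c ≠ e then h m - h (m + 1) else 0
  have hdigit : ∀ d ∈ Finset.range b,
      (avoiders b e).indicator (fun m => h m - h (m + 1)) (b * n + d) =
        if d = e then 0 else Δ (b * n + d) := by
    intro d hd
    simp only [Set.indicator_apply, mul_add_mem_avoiders_iff hb (Finset.mem_range.mp hd), Δ]
    split_ifs <;> tauto
  have hgap : (gapPrefixes b e).indicator (fun m => h (b * m + e) - h (b * m + e + 1)) n =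
      ∑ d ∈ Finset.range b, if d = e then Δ (b * n + d) else 0 := by
    rw [Finset.sum_ite_eq', if_pos (Finset.mem_range.mpr he)]
    simp only [Set.indicator_apply, gapPrefixes, Set.mem_ofPred_eq, Δ]
  rw [Finset.sum_congr rfl hdigit, hgap, ← Finset.sum_add_distrib]
  simp only [ite_add_ite, zero_add, add_zero, ite_self]
  rcases eq_or_ne n 0 with rfl | hn
  · obtain ⟨c, rfl⟩ := Nat.exists_eq_add_of_lt (Nat.zero_lt_of_lt hb)
    have := Finset.sum_range_sub' (fun d => h (d + 1)) c
    simpa [Finset.sum_range_succ', Δ, avoiders] using this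
  · have hne (d : ℕ) : b * n + d ≠ 0 := by positivity
    have htelescope := Finset.sum_range_sub' (fun d => h (b * n + d)) b
    simp only [add_zero, ← add_assoc] at htelescope
    simp only [Δ, avoiders, Set.indicator_apply, Set.mem_ofPred_eq, ne_eq, hn, hne,
      not_false_eq_true, true_and, if_false, zero_add, mul_add_one]
    split_ifs
    · exact htelescope
    · exact Finset.sum_const_zero

theorem sum_range_indicator_avoiders (hb : 1 < b) (he : e < b) {L : ℕ} (hL : L ≠ 0) :
    ∑ n ∈ Finset.range (b * L), (avoiders b e).indicator (fun n => h n - h (n + 1)) n +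
        ∑ n ∈ Finset.range L,
          (gapPrefixes b e).indicator (fun n => h (b * n + e) - h (b * n + e + 1)) n =
      h 1 - h b + ∑ n ∈ Finset.range L,
        (avoiders b e).indicator (fun n => h (b * n) - h (b * (n + 1))) n := by
  have hblocks (f : ℕ → M) : ∑ n ∈ Finset.range (b * L), f n =
      ∑ n ∈ Finset.range L, ∑ d ∈ Finset.range b, f (b * n + d) := by
    clear hL
    induction L with
    | zero => simp
    | succ L ih => rw [mul_add_one, Finset.sum_range_add, ih, Finset.sum_range_succ]
  rw [hblocks, ← Finset.sum_add_distrib,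
    Finset.sum_congr rfl fun n _ => sum_indicator_avoiders_block h hb he n,
    Finset.sum_add_distrib, Finset.sum_ite_eq', if_pos (Finset.mem_range.mpr (by omega))]

theorem tsum_avoiders_add_tsum_gapPrefixes [TopologicalSpace M] [IsTopologicalAddGroup M]
    [T2Space M] (hb : 1 < b) (he : e < b)
    (hdiff : Summable fun n : avoiders b e => h n - h (n + 1))
    (hgap : Summable fun n : gapPrefixes b e => h (b * n + e) - h (b * n + e + 1))
    (hscaled : Summable fun n : avoiders b e => h (b * n) - h (b * (n + 1))) :
    ∑' n : avoiders b e, (h n - h (n + 1)) +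
        ∑' n : gapPrefixes b e, (h (b * n + e) - h (b * n + e + 1)) =
      h 1 - h b + ∑' n : avoiders b e, (h (b * n) - h (b * (n + 1))) := by
  have hblocks : Tendsto (fun L : ℕ => b * L) atTop atTop :=
    tendsto_id.const_mul_atTop' (by omega)
  have tendsto_sum {X : Set ℕ} (f : ℕ → M) (hf : Summable fun n : X => f n) :
      Tendsto (fun L => ∑ n ∈ Finset.range L, X.indicator f n) atTop (𝓝 (∑' n : X, f n)) :=
    (hasSum_subtype_iff_indicator.mp hf.hasSum).tendsto_sum_nat
  have hleft := ((tendsto_sum (fun n => h n - h (n + 1)) hdiff).comp hblocks).add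
    (tendsto_sum (fun n => h (b * n + e) - h (b * n + e + 1)) hgap)
  have hright := (tendsto_sum (fun n => h (b * n) - h (b * (n + 1))) hscaled).const_add
    (h 1 - h b)
  refine tendsto_nhds_unique hleft (hright.congr' ?_)
  filter_upwards [eventually_ne_atTop 0] with L hL
  exact (sum_range_indicator_avoiders h hb he hL).symm

end DigitAvoidance

section GapSums

variable {b e : ℕ}

theorem avoiders_subset_gapPrefixes (hb : b ≠ 0) : avoiders b e ⊆ gapPrefixes b e :=
  fun _ ⟨hn, hdigits⟩ => ⟨by positivity, hdigits⟩

theorem tsum_invPowDiff_avoiders_add_gap (hb : 1 < b) (he : e < b) {j : ℕ} (hj : j ≠ 0) :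
    ∑' n : avoiders b e, invPowDiff j n + ∑' n : gapPrefixes b e, invPowDiff j (b * n + e) =
      1 - ((b : ℝ)⁻¹) ^ j + ((b : ℝ)⁻¹) ^ j * ∑' n : avoiders b e, invPowDiff j n := by
  have hb0 : b ≠ 0 := by omega
  have hsum : Summable (invPowDiff j) := (hasAnalyticDecay_invPowDiff j).summable (by omega)
  have hdiff : Summable fun n : avoiders b e => invPowDiff j n := hsum.subtype _
  have hinj : Function.Injective fun n : gapPrefixes b e => b * n + e := fun m n hmn =>
    Subtype.ext <| by simpa [hb0] using hmn
  have hscaled (n : ℕ) : (((b * n : ℕ) : ℝ)⁻¹) ^ j - (((b * (n + 1) : ℕ) : ℝ)⁻¹) ^ j =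
      ((b : ℝ)⁻¹) ^ j * invPowDiff j n := by
    push_cast [invPowDiff]
    simp only [mul_inv, mul_pow, mul_sub]
  have hscaled_summable : Summable fun n : avoiders b e =>
      (((b * n : ℕ) : ℝ)⁻¹) ^ j - (((b * (n + 1) : ℕ) : ℝ)⁻¹) ^ j :=
    (hdiff.mul_left _).congr fun n => (hscaled n).symm
  have hidentity := tsum_avoiders_add_tsum_gapPrefixes (fun n : ℕ => ((n : ℝ)⁻¹) ^ j) hb he
    hdiff (hsum.comp_injective hinj) hscaled_summable
  simp only [hscaled, tsum_mul_left, Nat.cast_one, inv_one, one_pow] at hidentity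
  exact hidentity

/-- The difference `log (n + 1) - log n`; it vanishes at `n = 0` because `log 0 = 0`. -/
noncomputable def logDiff (n : ℕ) : ℝ :=
  Real.log (n + 1 : ℕ) - Real.log n

theorem logDiff_zero : logDiff 0 = 0 := by
  simp [logDiff]

theorem logDiff_eq_log_one_add {n : ℕ} (hn : n ≠ 0) : logDiff n = Real.log (1 + (n : ℝ)⁻¹) := by
  rw [logDiff, ← Real.log_div (by positivity) (by positivity)]
  congr 1
  push_cast
  field_simp

theorem inv_succ_le_logDiff {n : ℕ} (hn : n ≠ 0) : ((n + 1 : ℕ) : ℝ)⁻¹ ≤ logDiff n := by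
  rw [logDiff_eq_log_one_add hn]
  refine le_trans (le_of_eq ?_) (Real.one_sub_inv_le_log_of_pos (by positivity))
  push_cast
  field_simp
  ring

theorem logDiff_le_inv (n : ℕ) : logDiff n ≤ (n : ℝ)⁻¹ := by
  rcases eq_or_ne n 0 with rfl | hn
  · simp [logDiff_zero]
  · rw [logDiff_eq_log_one_add hn]
    simpa using Real.log_le_sub_one_of_pos (by positivity : 0 < 1 + (n : ℝ)⁻¹)

theorem logDiff_nonneg (n : ℕ) : 0 ≤ logDiff n := by
  rcases eq_or_ne n 0 with rfl | hn
  · exact logDiff_zero.ge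
  · exact le_trans (by positivity) (inv_succ_le_logDiff hn)

theorem neg_log_sub_neg_log_succ (n : ℕ) : -Real.log n - -Real.log (n + 1 : ℕ) = logDiff n :=
  neg_sub_neg _ _

theorem neg_log_mul_sub_neg_log_mul_succ (hb : b ≠ 0) {n : ℕ} (hn : n ≠ 0) :
    -Real.log (b * n : ℕ) - -Real.log (b * (n + 1) : ℕ) = logDiff n := by
  rw [logDiff, Nat.cast_mul, Nat.cast_mul, Real.log_mul (by positivity) (by positivity),
    Real.log_mul (by positivity) (by positivity)]
  ring

theorem summable_logDiff_gapPrefixes (hb : 1 < b) (he : e < b) :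
    Summable fun n : gapPrefixes b e => logDiff (b * n + e) := by
  have hnonneg (X : Set ℕ) (f : ℕ → ℕ) (n : ℕ) : 0 ≤ X.indicator (fun n => logDiff (f n)) n :=
    Set.indicator_nonneg (fun _ _ => logDiff_nonneg _) n
  have hscaled : (avoiders b e).indicator
      (fun n => -Real.log (b * n : ℕ) - -Real.log (b * (n + 1) : ℕ)) =
        (avoiders b e).indicator logDiff :=
    Set.indicator_congr fun n hn => neg_log_mul_sub_neg_log_mul_succ (by omega) hn.1
  have hpartial (L : ℕ) : ∑ n ∈ Finset.range L,
      (gapPrefixes b e).indicator (fun n => logDiff (b * n + e)) n ≤ Real.log b := by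
    rcases eq_or_ne L 0 with rfl | hL
    · simpa using Real.log_natCast_nonneg b
    have hidentity := sum_range_indicator_avoiders (fun n : ℕ => -Real.log n) hb he hL
    have hmono : ∑ n ∈ Finset.range L, (avoiders b e).indicator logDiff n ≤
        ∑ n ∈ Finset.range (b * L), (avoiders b e).indicator logDiff n :=
      Finset.sum_le_sum_of_subset_of_nonneg
        (Finset.range_mono (Nat.le_mul_of_pos_left L (by omega))) fun n _ _ => hnonneg _ id n
    simp only [neg_log_sub_neg_log_succ, hscaled, Nat.cast_one, Real.log_one] at hidentity
    linarith
  exact summable_subtype_iff_indicator.mpr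
    (summable_of_sum_range_le (hnonneg _ fun n => b * n + e) hpartial)

theorem summable_inv_avoiders (hb : 1 < b) (he : e < b) :
    Summable fun n : avoiders b e => (n : ℝ)⁻¹ := by
  have hb0 : b ≠ 0 := by omega
  have hgap : Summable fun n : avoiders b e => logDiff (b * n + e) :=
    (summable_logDiff_gapPrefixes hb he).comp_injective
      (i := Set.inclusion (avoiders_subset_gapPrefixes hb0)) (Set.inclusion_injective _)
  refine .of_nonneg_of_le (fun n => by positivity) (fun n => ?_) (hgap.mul_left (2 * (b : ℝ)))
  have hn : (n : ℕ) ≠ 0 := n.2.1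
  have hle : b * n + e + 1 ≤ 2 * b * n := by nlinarith [Nat.one_le_iff_ne_zero.mpr hn]
  calc (n : ℝ)⁻¹ = 2 * b * ((2 * b * n : ℕ) : ℝ)⁻¹ := by
        push_cast
        field_simp
    _ ≤ 2 * b * ((b * n + e + 1 : ℕ) : ℝ)⁻¹ := by gcongr
    _ ≤ 2 * b * logDiff (b * n + e) := by
        gcongr
        exact inv_succ_le_logDiff (by positivity)

theorem tsum_logDiff_gapPrefixes (hb : 1 < b) (he : e < b) :
    ∑' n : gapPrefixes b e, logDiff (b * n + e) = Real.log b := by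
  have hdiff : Summable fun n : avoiders b e => logDiff n :=
    .of_nonneg_of_le (fun n => logDiff_nonneg n) (fun n => logDiff_le_inv n)
      (summable_inv_avoiders hb he)
  have hscaled (n : avoiders b e) :
      -Real.log (b * n : ℕ) - -Real.log (b * (n + 1) : ℕ) = logDiff n :=
    neg_log_mul_sub_neg_log_mul_succ (by omega) n.2.1
  have hidentity := tsum_avoiders_add_tsum_gapPrefixes (fun n : ℕ => -Real.log n) hb he
    (by simpa only [neg_log_sub_neg_log_succ] using hdiff)
    (by simpa only [neg_log_sub_neg_log_succ] using summable_logDiff_gapPrefixes hb he)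
    (by simpa only [hscaled] using hdiff)
  simp only [neg_log_sub_neg_log_succ, hscaled, Nat.cast_one, Real.log_one] at hidentity
  linarith

end GapSums

section EndDigits

/-- The smallest base-`b` digit `0` for `δ = 0`, and the largest one `b - 1` for `δ = 1`. The
interval `[b * n + endDigit δ b, b * n + endDigit δ b + 1]` has one endpoint `b * (n + δ)`, the
other being `b * (n + δ) + (-1) ^ δ`. -/
def endDigit (δ b : ℕ) : ℕ :=
  δ * (b - 1)

/-- The integers `m` such that `b * m` is an endpoint of the unit interval
`[b * n + endDigit δ b, b * n + endDigit δ b + 1]` attached to a prefix `n` in `gapPrefixes`. -/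
def gapNodes (δ b : ℕ) : Set ℕ :=
  (· + δ) '' gapPrefixes b (endDigit δ b)

variable {δ b : ℕ}

theorem endDigit_lt (hδ : δ ≤ 1) (hb : 1 < b) : endDigit δ b < b := by
  interval_cases δ <;> simp only [endDigit] <;> omega

theorem zero_notMem_avoiders (b e : ℕ) : 0 ∉ avoiders b e :=
  fun h => h.1 rfl

theorem Ico_one_subset_avoiders_endDigit (hδ : δ ≤ 1) (b : ℕ) :
    Set.Ico 1 (b - 1) ⊆ avoiders b (endDigit δ b) := by
  rintro n ⟨hn, hnb⟩
  have hne : n ≠ endDigit δ b := by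
    interval_cases δ <;> simp only [endDigit] <;> omega
  simpa [avoiders, Nat.digits_of_lt b n (by omega) (by omega), hne] using (by omega : n ≠ 0)

theorem sub_succ_endDigit (hδ : δ ≤ 1) (hb : b ≠ 0) (h : ℝ → ℝ) (n : ℕ) :
    h (b * n + endDigit δ b : ℕ) - h (b * n + endDigit δ b + 1 : ℕ) =
      (-1) ^ δ * (h (b * (n + δ : ℕ)) - h (b * (n + δ : ℕ) + (-1) ^ δ)) := by
  obtain ⟨c, rfl⟩ := Nat.exists_eq_succ_of_ne_zero hb
  interval_cases δ
  · simp [endDigit]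
  · push_cast [endDigit, Nat.succ_eq_add_one, Nat.add_sub_cancel]
    ring_nf

theorem one_lt_mul_gapNode (hδ : δ ≤ 1) (hb : 1 < b) {n : ℕ}
    (hn : n ∈ gapPrefixes b (endDigit δ b)) : (1 : ℝ) < b * (n + δ : ℕ) := by
  have hpos : 1 ≤ n + δ := by
    by_contra! h0
    obtain ⟨rfl, rfl⟩ : n = 0 ∧ δ = 0 := by omega
    simp [gapPrefixes, endDigit] at hn
  exact_mod_cast (by nlinarith : 1 < b * (n + δ))

theorem exists_analyticAt_invPowDiff_endDigit_eq (hδ : δ ≤ 1) (j : ℕ) :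
    ∃ φ : ℝ → ℝ, AnalyticAt ℝ φ 0 ∧ ∀ b > 1, ∀ n ∈ gapPrefixes b (endDigit δ b),
      invPowDiff j (b * n + endDigit δ b) = ((b : ℝ)⁻¹) ^ (j + 1) *
        ((((n + δ : ℕ) : ℝ)⁻¹) ^ (j + 1) * φ ((b : ℝ)⁻¹ * ((n + δ : ℕ) : ℝ)⁻¹)) := by
  obtain ⟨φ, hφ, -, hφ_mul⟩ := exists_analyticAt_one_sub_inv_one_add_pow (𝕜 := ℝ) j
  refine ⟨fun x => φ ((-1) ^ δ * x), .fun_comp (by simpa using hφ)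
    (analyticAt_const.mul analyticAt_id), fun b hb n hn => ?_⟩
  have hy : (0 : ℝ) < b * (n + δ : ℕ) := one_pos.trans (one_lt_mul_gapNode hδ hb hn)
  have hfactor : (b * (n + δ : ℕ) + (-1) ^ δ : ℝ)⁻¹ =
      (b * (n + δ : ℕ) : ℝ)⁻¹ * (1 + (-1) ^ δ * (b * (n + δ : ℕ) : ℝ)⁻¹)⁻¹ := by
    rw [← mul_inv, mul_add, mul_one, mul_left_comm, mul_inv_cancel₀ hy.ne', mul_one]
  have hsign : ((-1 : ℝ) ^ δ) * (-1) ^ δ = 1 := by simp [← mul_pow]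
  rw [invPowDiff, sub_succ_endDigit hδ (by omega) fun y : ℝ => (y⁻¹) ^ j, hfactor, ← mul_assoc,
    ← mul_pow (b : ℝ)⁻¹, ← mul_inv (b : ℝ)]
  set x : ℝ := (b * (n + δ : ℕ) : ℝ)⁻¹
  calc (-1) ^ δ * (x ^ j - (x * (1 + (-1) ^ δ * x)⁻¹) ^ j)
      = (-1) ^ δ * x ^ j * (1 - ((1 + (-1) ^ δ * x)⁻¹) ^ j) := by ring
    _ = (-1) ^ δ * (-1) ^ δ * x ^ (j + 1) * φ ((-1) ^ δ * x) := by rw [hφ_mul]; ring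
    _ = x ^ (j + 1) * φ ((-1) ^ δ * x) := by rw [hsign, one_mul]

theorem exists_analyticAt_logDiff_endDigit_eq (hδ : δ ≤ 1) :
    ∃ φ : ℝ → ℝ, AnalyticAt ℝ φ 0 ∧ ∀ b > 1, ∀ n ∈ gapPrefixes b (endDigit δ b),
      logDiff (b * n + endDigit δ b) = (b : ℝ)⁻¹ * ((n + δ : ℕ) : ℝ)⁻¹ + ((b : ℝ)⁻¹) ^ 2 *
        ((((n + δ : ℕ) : ℝ)⁻¹) ^ 2 * φ ((b : ℝ)⁻¹ * ((n + δ : ℕ) : ℝ)⁻¹)) := by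
  obtain ⟨φ, hφ, hφ_mul⟩ := exists_analyticAt_log_one_add_eq
  refine ⟨fun x => (-1) ^ δ * φ ((-1) ^ δ * x), analyticAt_const.mul (.fun_comp
    (by simpa using hφ) (analyticAt_const.mul analyticAt_id)), fun b hb n hn => ?_⟩
  have hy := one_lt_mul_gapNode hδ hb hn
  have hsign : ((-1 : ℝ) ^ δ) * (-1) ^ δ = 1 := by simp [← mul_pow]
  have hother : (0 : ℝ) < b * (n + δ : ℕ) + (-1) ^ δ := by
    rcases neg_one_pow_eq_or ℝ δ with h | h <;> rw [h] <;> linarith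
  have hquot : (b * (n + δ : ℕ) + (-1) ^ δ : ℝ) / (b * (n + δ : ℕ)) =
      1 + (-1) ^ δ * (b * (n + δ : ℕ) : ℝ)⁻¹ := by
    rw [add_div, div_self (one_pos.trans hy).ne', div_eq_mul_inv]
  rw [← neg_log_sub_neg_log_succ, sub_succ_endDigit hδ (by omega) fun y : ℝ => -Real.log y,
    neg_sub_neg, ← Real.log_div hother.ne' (one_pos.trans hy).ne', hquot, ← mul_assoc (_ ^ 2),
    ← mul_pow, ← mul_inv]
  set x : ℝ := (b * (n + δ : ℕ) : ℝ)⁻¹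
  calc (-1) ^ δ * Real.log (1 + (-1) ^ δ * x)
      = (-1) ^ δ * (-1) ^ δ * (x + x ^ 2 * ((-1) ^ δ * φ ((-1) ^ δ * x))) := by rw [hφ_mul]; ring
    _ = x + x ^ 2 * ((-1) ^ δ * φ ((-1) ^ δ * x)) := by rw [hsign, one_mul]

theorem gapPrefixes_endDigit_zero (hb : b ≠ 0) :
    gapPrefixes b (endDigit 0 b) = avoiders b (endDigit 0 b) := by
  ext n
  simp [gapPrefixes, avoiders, endDigit, hb]

theorem gapPrefixes_endDigit_one (hb : 1 < b) :
    gapPrefixes b (endDigit 1 b) = {0} ∪ avoiders b (endDigit 1 b) := by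
  ext n
  have hb0 : b ≠ 0 := by omega
  rcases eq_or_ne n 0 with rfl | hn
  · simpa [gapPrefixes, endDigit] using (by omega : b * 0 + (b - 1) ≠ 0)
  · simp [gapPrefixes, avoiders, endDigit, hn, hb0]

theorem hasSum_gapNodes_iff {t : ℕ → ℝ} {s : ℝ} :
    HasSum (fun m : gapNodes δ b => t m) s ↔
      HasSum (fun n : gapPrefixes b (endDigit δ b) => t (n + δ)) s :=
  (Equiv.Set.image (· + δ) _ (add_left_injective δ)).hasSum_iff.symm

theorem hasSum_gapNodes (hδ : δ ≤ 1) (hb : 1 < b) {t : ℕ → ℝ} {s : ℝ}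
    (ht : HasSum (fun n : avoiders b (endDigit δ b) => t (n + δ)) s) :
    HasSum (fun m : gapNodes δ b => t m) (δ * t 1 + s) := by
  rw [hasSum_gapNodes_iff]
  interval_cases δ
  · rw [gapPrefixes_endDigit_zero (by omega)]
    simpa using ht
  · rw [gapPrefixes_endDigit_one hb]
    have hzero : HasSum (fun n : ({0} : Set ℕ) => t (n + 1)) (t 1) := by
      simpa using hasSum_unique fun n : ({0} : Set ℕ) => t (n + 1)
    have hdisjoint : Disjoint {0} (avoiders b (endDigit 1 b)) := by
      simpa using zero_notMem_avoiders _ _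
    rw [Nat.cast_one, one_mul]
    exact HasSum.add_disjoint (f := fun n => t (n + 1)) hdisjoint hzero ht

end EndDigits

section Expansions

variable {δ N : ℕ}

theorem tsum_gapNodes_eq_tsum_gapPrefixes (δ b : ℕ) (t : ℕ → ℝ) :
    ∑' m : gapNodes δ b, t m = ∑' n : gapPrefixes b (endDigit δ b), t (n + δ) :=
  tsum_image t (add_left_injective δ).injOn

theorem exists_tsum_invPowDiff_avoiders_eq (hδ : δ ≤ 1) {j : ℕ} (hj : j ≠ 0) :
    ∃ φ : ℝ → ℝ, AnalyticAt ℝ φ 0 ∧ ∀ b > 1,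
      ∑' n : avoiders b (endDigit δ b), invPowDiff j n - 1 =
        ((b : ℝ)⁻¹) ^ j * (∑' n : avoiders b (endDigit δ b), invPowDiff j n - 1) -
          ((b : ℝ)⁻¹) ^ (j + 1) *
            ∑' m : gapNodes δ b, ((m : ℝ)⁻¹) ^ (j + 1) * φ ((b : ℝ)⁻¹ * (m : ℝ)⁻¹) := by
  obtain ⟨φ, hφ, hφ_eq⟩ := exists_analyticAt_invPowDiff_endDigit_eq hδ j
  refine ⟨φ, hφ, fun b hb => ?_⟩
  have hidentity := tsum_invPowDiff_avoiders_add_gap hb (endDigit_lt hδ hb) hj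
  rw [tsum_congr fun n : gapPrefixes b (endDigit δ b) => hφ_eq b hb n n.2, tsum_mul_left,
    ← tsum_gapNodes_eq_tsum_gapPrefixes δ b
      fun m => ((m : ℝ)⁻¹) ^ (j + 1) * φ ((b : ℝ)⁻¹ * (m : ℝ)⁻¹)] at hidentity
  linarith

theorem hasInvExpansion_tsum_gapNodes (hδ : δ ≤ 1) {t : ℕ → ℝ} (ht : Summable t)
    (hA : HasInvExpansion N fun b => ∑' n : avoiders b (endDigit δ b), t (n + δ)) :
    HasInvExpansion N fun b => ∑' m : gapNodes δ b, t m := by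
  refine ((HasPolyExpansion.const N (δ * t 1)).add hA).congr ?_
  filter_upwards [eventually_gt_atTop 1] with b hb
  have hshift : Summable fun n : avoiders b (endDigit δ b) => t (n + δ) :=
    ((summable_nat_add_iff δ).mpr ht).subtype _
  exact (hasSum_gapNodes hδ hb hshift.hasSum).tsum_eq.symm

theorem hasInvExpansion_tsum_gapNodes_comp (hδ : δ ≤ 1)
    (hA : ∀ k ≥ 2, ∀ f, HasAnalyticDecay k f →
      HasInvExpansion N fun b => ∑' n : avoiders b (endDigit δ b), f n)
    {k : ℕ} (hk : 2 ≤ k) {φ : ℝ → ℝ} (hφ : AnalyticAt ℝ φ 0) :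
    HasInvExpansion N fun b =>
      ∑' m : gapNodes δ b, ((m : ℝ)⁻¹) ^ k * φ ((b : ℝ)⁻¹ * (m : ℝ)⁻¹) := by
  refine .tsum_inv_pow_mul_comp tendsto_inv_atTop_nhds_zero_nat hk (fun i hi => ?_) hφ
  have hi2 : 2 ≤ i := hk.trans hi
  have hpow : Summable fun m : ℕ => ((m : ℝ)⁻¹) ^ i :=
    (hasAnalyticDecay_inv_add_pow i 0).summable hi2
  exact hasInvExpansion_tsum_gapNodes hδ hpow (hA i hi2 _ (hasAnalyticDecay_inv_add_pow i δ))

theorem hasInvExpansion_tsum_avoiders (hδ : δ ≤ 1) (N : ℕ) :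
    ∀ k ≥ 2, ∀ f, HasAnalyticDecay k f →
      HasInvExpansion N fun b => ∑' n : avoiders b (endDigit δ b), f n := by
  have hX0 (b : ℕ) := zero_notMem_avoiders b (endDigit δ b)
  have hX := Ico_one_subset_avoiders_endDigit hδ
  have hu : Tendsto (fun b : ℕ => (b : ℝ)⁻¹) atTop (𝓝 0) := tendsto_inv_atTop_nhds_zero_nat
  induction N with
  | zero =>
    exact fun k hk f hf => hasInvExpansion_tsum_of_isBigO hX0 hX
      (hf.isBigO.trans (isBigO_pow_of_tendsto_zero hu hk))
  | succ N ih =>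
    refine fun k hk f hf => hasInvExpansion_tsum_of_invPowDiff hX0 hX (fun j hj => ?_) hk hf
    obtain ⟨φ, hφ, hidentity⟩ := exists_tsum_invPowDiff_avoiders_eq hδ hj
    have hdiff : HasInvExpansion N fun b =>
        ∑' n : avoiders b (endDigit δ b), invPowDiff j n - 1 :=
      (ih (j + 1) (by omega) _ (hasAnalyticDecay_invPowDiff j)).sub (.const N 1)
    have hgap := hasInvExpansion_tsum_gapNodes_comp hδ ih (by omega : 2 ≤ j + 1) hφ
    have hdiff_succ : HasInvExpansion (N + 1) fun b =>
        ∑' n : avoiders b (endDigit δ b), invPowDiff j n - 1 := by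
      refine (((hdiff.pow_mul j).mono hu (by omega)).sub
        ((hgap.pow_mul (j + 1)).mono hu (by omega))).congr ?_
      filter_upwards [eventually_gt_atTop 1] with b hb
      exact (hidentity b hb).symm
    simpa only [sub_add_cancel] using hdiff_succ.add (.const (N + 1) 1)

theorem hasSum_gapNodes_inv (hδ : δ ≤ 1) {b : ℕ} (hb : 1 < b) :
    HasSum (fun m : gapNodes δ b => (m : ℝ)⁻¹)
      (∑' n : avoiders b (endDigit δ b), (n : ℝ)⁻¹ -
        δ * (∑' n : avoiders b (endDigit δ b), invPowDiff 1 n - 1)) := by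
  have hdiff : Summable fun n : avoiders b (endDigit δ b) => invPowDiff 1 n :=
    ((hasAnalyticDecay_invPowDiff 1).summable le_rfl).subtype _
  have hshift (n : ℕ) : (n : ℝ)⁻¹ - δ * invPowDiff 1 n = ((n + δ : ℕ) : ℝ)⁻¹ := by
    interval_cases δ <;> simp [invPowDiff]
  have hsum := (summable_inv_avoiders hb (endDigit_lt hδ hb)).hasSum.sub
    (hdiff.hasSum.mul_left (δ : ℝ))
  simp only [hshift] at hsum
  convert hasSum_gapNodes (t := fun n => (n : ℝ)⁻¹) hδ hb hsum using 1
  rw [Nat.cast_one, inv_one]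
  ring

theorem exists_mul_tsum_gapNodes_inv_eq (hδ : δ ≤ 1) :
    ∃ φ : ℝ → ℝ, AnalyticAt ℝ φ 0 ∧ ∀ b > 1,
      b * ∑' m : gapNodes δ b, (m : ℝ)⁻¹ = b ^ 2 * Real.log b -
        ∑' m : gapNodes δ b, ((m : ℝ)⁻¹) ^ 2 * φ ((b : ℝ)⁻¹ * (m : ℝ)⁻¹) := by
  obtain ⟨φ, hφ, hφ_eq⟩ := exists_analyticAt_logDiff_endDigit_eq hδ
  refine ⟨φ, hφ, fun b hb => ?_⟩
  have hb0 : (b : ℝ) ≠ 0 := by positivity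
  have hlog : HasSum (fun n : gapPrefixes b (endDigit δ b) => logDiff (b * n + endDigit δ b))
      (Real.log b) :=
    tsum_logDiff_gapPrefixes hb (endDigit_lt hδ hb) ▸
      (summable_logDiff_gapPrefixes hb (endDigit_lt hδ hb)).hasSum
  have hlog_nodes : HasSum (fun m : gapNodes δ b => (b : ℝ)⁻¹ * (m : ℝ)⁻¹ +
      ((b : ℝ)⁻¹) ^ 2 * (((m : ℝ)⁻¹) ^ 2 * φ ((b : ℝ)⁻¹ * (m : ℝ)⁻¹))) (Real.log b) :=
    (hasSum_gapNodes_iff (t := fun m => (b : ℝ)⁻¹ * (m : ℝ)⁻¹ +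
      ((b : ℝ)⁻¹) ^ 2 * (((m : ℝ)⁻¹) ^ 2 * φ ((b : ℝ)⁻¹ * (m : ℝ)⁻¹)))).mpr
      (hlog.congr_fun fun n => (hφ_eq b hb n n.2).symm)
  have hinv := (hasSum_gapNodes_inv hδ hb).summable.hasSum
  set K := ∑' m : gapNodes δ b, (m : ℝ)⁻¹
  have hremainder := (hlog_nodes.sub (hinv.mul_left (b : ℝ)⁻¹)).tsum_eq
  simp only [add_sub_cancel_left, tsum_mul_left] at hremainder
  rw [inv_pow, inv_mul_eq_iff_eq_mul₀ (pow_ne_zero 2 hb0)] at hremainder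
  linear_combination hremainder - b * K * mul_inv_cancel₀ hb0

theorem hasInvExpansion_mul_tsum_inv_avoiders_sub (hδ : δ ≤ 1) (N : ℕ) :
    HasInvExpansion N fun b =>
      b * (∑' n : avoiders b (endDigit δ b), (n : ℝ)⁻¹ - b * Real.log b) := by
  obtain ⟨φ, hφ, hlog⟩ := exists_mul_tsum_gapNodes_inv_eq hδ
  obtain ⟨ψ, hψ, hinv⟩ := exists_tsum_invPowDiff_avoiders_eq hδ one_ne_zero
  have hA := hasInvExpansion_tsum_avoiders hδ N
  have hu : Tendsto (fun b : ℕ => (b : ℝ)⁻¹) atTop (𝓝 0) := tendsto_inv_atTop_nhds_zero_nat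
  have hdiff := (hA 2 le_rfl _ (hasAnalyticDecay_invPowDiff 1)).sub (.const N 1)
  have hgap := ((hasInvExpansion_tsum_gapNodes_comp hδ hA le_rfl hψ).pow_mul 1).mono hu
    (by omega : N ≤ N + 1)
  refine (((hdiff.sub hgap).const_mul (δ : ℝ)).sub
    (hasInvExpansion_tsum_gapNodes_comp hδ hA le_rfl hφ)).congr ?_
  filter_upwards [eventually_gt_atTop 1] with b hb
  have hb0 : (b : ℝ) ≠ 0 := by positivity
  set D := ∑' n : avoiders b (endDigit δ b), invPowDiff 1 n - 1
  set T := ∑' m : gapNodes δ b, ((m : ℝ)⁻¹) ^ 2 * ψ ((b : ℝ)⁻¹ * (m : ℝ)⁻¹)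
  have hD : b * D = D - (b : ℝ)⁻¹ ^ 1 * T := by
    linear_combination b * hinv b hb + (D - (b : ℝ)⁻¹ * T) * mul_inv_cancel₀ hb0
  have hlog_b := hlog b hb
  rw [(hasSum_gapNodes_inv hδ hb).tsum_eq] at hlog_b
  linear_combination -hlog_b - δ * hD

end Expansions

section KempnerSums

theorem exists_coeff_abs_sub_sum_Icc_le {F : ℕ → ℝ} (hF : ∀ N, HasInvExpansion N fun b => b * F b) :
    ∃ a : ℕ → ℝ, ∀ M : ℕ, ∃ C > (0 : ℝ), ∃ B : ℕ, ∀ b : ℕ, B ≤ b →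
      |F b - ∑ m ∈ Finset.Icc 1 M, a m / (b : ℝ) ^ m| ≤ C / (b : ℝ) ^ (M + 1) := by
  have hu : Tendsto (fun b : ℕ => (b : ℝ)⁻¹) atTop (𝓝[≠] 0) :=
    (tendsto_inv_atTop_nhdsGT_zero.comp tendsto_natCast_atTop_atTop).mono_right
      (nhdsWithin_mono 0 fun _ h => ne_of_gt h)
  obtain ⟨c, hc⟩ := HasPolyExpansion.exists_coeff hu hF
  refine ⟨fun m => c (m - 1), fun M => ?_⟩
  obtain ⟨C, hC, hbound⟩ := (hc M).exists_pos
  refine ⟨C, hC, eventually_atTop.mp ?_⟩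
  filter_upwards [hbound.bound, eventually_ne_atTop 0] with b hb hb0
  have hsum : ∑ m ∈ Finset.Icc 1 M, c (m - 1) / (b : ℝ) ^ m =
      (b : ℝ)⁻¹ * ∑ m ∈ Finset.range M, c m * ((b : ℝ)⁻¹) ^ m := by
    rw [← Finset.Ico_add_one_right_eq_Icc, Finset.sum_Ico_eq_sum_range, Finset.mul_sum]
    refine Finset.sum_congr (by simp) fun m _ => ?_
    rw [Nat.add_sub_cancel_left, add_comm 1 m, div_eq_mul_inv, ← inv_pow]
    ring
  have hfactor : F b - ∑ m ∈ Finset.Icc 1 M, c (m - 1) / (b : ℝ) ^ m =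
      (b : ℝ)⁻¹ * (b * F b - ∑ m ∈ Finset.range M, c m * ((b : ℝ)⁻¹) ^ m) := by
    rw [hsum, mul_sub, inv_mul_cancel_left₀ (by positivity)]
  calc |F b - ∑ m ∈ Finset.Icc 1 M, c (m - 1) / (b : ℝ) ^ m|
      ≤ (b : ℝ)⁻¹ * (C * ((b : ℝ)⁻¹) ^ M) := by
        rw [hfactor, abs_mul, abs_of_nonneg (by positivity)]
        gcongr
        simpa using hb
    _ = C / (b : ℝ) ^ (M + 1) := by
        rw [div_eq_mul_inv, ← inv_pow]
        ring

theorem kempnerSum_singleton (b e : ℕ) : kempnerSum b {e} = ∑' n : avoiders b e, (n : ℝ)⁻¹ := by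
  rw [tsum_subtype (avoiders b e) fun n : ℕ => (n : ℝ)⁻¹]
  simp only [kempnerSum, Set.indicator_apply, avoiders, Set.mem_ofPred_eq, Finset.mem_singleton]

theorem exists_coeff_abs_kempnerSum_endDigit_sub_le {δ : ℕ} (hδ : δ ≤ 1) :
    ∃ a : ℕ → ℝ, ∀ M : ℕ, ∃ C > (0 : ℝ), ∃ B : ℕ, ∀ b : ℕ, B ≤ b →
      |kempnerSum b {endDigit δ b} - (b : ℝ) * Real.log b
        - ∑ m ∈ Finset.Icc 1 M, a m / (b : ℝ) ^ m| ≤ C / (b : ℝ) ^ (M + 1) := by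
  simp only [kempnerSum_singleton]
  exact exists_coeff_abs_sub_sum_Icc_le (hasInvExpansion_mul_tsum_inv_avoiders_sub hδ)

end KempnerSums

theorem kempner_full_asymptotic_expansion :
    ∃ a a' : ℕ → ℝ, ∀ M : ℕ, 1 ≤ M →
      ∃ C > (0 : ℝ), ∃ B : ℕ, ∀ b : ℕ, B ≤ b →
        |kempnerSum b {0} - (b : ℝ) * Real.log b
          - ∑ m ∈ Finset.Icc 1 M, a m / (b : ℝ) ^ m| ≤ C / (b : ℝ) ^ (M + 1) ∧
        |kempnerSum b {b - 1} - (b : ℝ) * Real.log b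
          - ∑ m ∈ Finset.Icc 1 M, a' m / (b : ℝ) ^ m| ≤ C / (b : ℝ) ^ (M + 1) := by
  obtain ⟨a, ha⟩ := exists_coeff_abs_kempnerSum_endDigit_sub_le zero_le_one
  obtain ⟨a', ha'⟩ := exists_coeff_abs_kempnerSum_endDigit_sub_le le_rfl
  simp only [endDigit, zero_mul] at ha
  simp only [endDigit, one_mul] at ha'
  refine ⟨a, a', fun M _ => ?_⟩
  obtain ⟨C, hC, B, hB⟩ := ha M
  obtain ⟨C', -, B', hB'⟩ := ha' M
  refine ⟨max C C', lt_max_of_lt_left hC, max B B', fun b hb => ⟨?_, ?_⟩⟩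
  · exact (hB b (le_of_max_le_left hb)).trans (by gcongr; exact le_max_left C C')
  · exact (hB' b (le_of_max_le_right hb)).trans (by gcongr; exact le_max_right C C')
end

section
/- Let b ≥ 2 be an integer and E a nonempty set of base-b digits. Then K(b,E) = (b/#E)·log(b) − ∫_{[0,1)} (1/b)·Σ_{d∈F} (ψ(1) − ψ(1 − (d−x)/b)) dμ_{b,E}(x), where F = {b − a : a ∈ E1}. -/
open MeasureTheory Real ENNReal

open Filter Topology Set

/-!
Split a nonempty digit string into its leading digit `a` and the rest. On measures this reads
`μ = δ₀ + b⁻¹ ∑ₐ (x ↦ (a + x) / b)_* μ`, over the allowed digits `a`; on integers it gives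
`K(b,E) = ∫ ∑_{a ≠ 0} 1 / (a + x) dμ`.

The sum of `ψ(1 - (d - x) / b)` over all digits `d` is `b ψ(1 + x) - b log b`, by Gauss's
multiplication formula. The digits `d ∉ F` are the residues of `-a` modulo `b` for `a` allowed, and
there `ψ(y + 1) = ψ(y) + 1 / y` turns the summand into `ψ(1 + (a + x) / b) - b / (a + x)`, without
the last term when `a = 0`. So the integral over `F` involves `K(b,E)`, the mass `b / #E` of `μ`,
and the integral of `ψ(1 + x) - b⁻¹ ∑ₐ ψ(1 + (a + x) / b)`, which is `ψ(1)` by self-similarity.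
-/

section Digamma

lemma differentiableAt_log_Gamma {x : ℝ} (hx : 0 < x) :
    DifferentiableAt ℝ (fun y => Real.log (Gamma y)) x :=
  (differentiableOn_Gamma_Ioi.differentiableAt (Ioi_mem_nhds hx)).log (Gamma_pos_of_pos hx).ne'

lemma log_Gamma_add_one {x : ℝ} (hx : 0 < x) :
    Real.log (Gamma (x + 1)) = Real.log (Gamma x) + Real.log x := by
  rw [Gamma_add_one hx.ne', log_mul hx.ne' (Gamma_pos_of_pos hx).ne', add_comm]

lemma slope_log_Gamma_add_one {x : ℝ} (hx : 0 < x) :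
    slope (Real.log ∘ Gamma) x (x + 1) = Real.log x := by
  simp [slope_def_field, log_Gamma_add_one hx]

lemma digamma_add_one {x : ℝ} (hx : 0 < x) : digamma (x + 1) = digamma x + 1 / x := by
  have h_shift : (fun y => Real.log (Gamma (y + 1))) =ᶠ[𝓝 x]
      fun y => Real.log (Gamma y) + Real.log y := by
    filter_upwards [lt_mem_nhds hx] with y hy using log_Gamma_add_one hy
  rw [digamma, ← deriv_comp_add_const (f := fun y => Real.log (Gamma y)) 1 x, h_shift.deriv_eq,
    deriv_fun_add (differentiableAt_log_Gamma hx) (differentiableAt_log hx.ne'), deriv_log,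
    ← one_div, digamma]

lemma digamma_le_log {x : ℝ} (hx : 0 < x) : digamma x ≤ Real.log x :=
  (convexOn_log_Gamma.deriv_le_slope hx (mem_Ioi.2 (by linarith)) (lt_add_one x)
    (differentiableAt_log_Gamma hx)).trans_eq (slope_log_Gamma_add_one hx)

lemma log_le_digamma_add_one {x : ℝ} (hx : 0 < x) : Real.log x ≤ digamma (x + 1) :=
  (slope_log_Gamma_add_one hx).symm.trans_le <|
    convexOn_log_Gamma.slope_le_deriv hx (mem_Ioi.2 (by linarith)) (lt_add_one x)
      (differentiableAt_log_Gamma (by linarith))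

lemma log_sub_one_div_le_digamma {x : ℝ} (hx : 0 < x) : Real.log x - 1 / x ≤ digamma x := by
  linarith [log_le_digamma_add_one hx, digamma_add_one hx]

lemma abs_digamma_le_one {x : ℝ} (hx : x ∈ Icc (1 : ℝ) 2) : |digamma x| ≤ 1 := by
  obtain ⟨h1, h2⟩ := hx
  have h0 : 0 < x := by linarith
  have h_upper : digamma x ≤ x - 1 := (digamma_le_log h0).trans (log_le_sub_one_of_pos h0)
  have h_lower : Real.log x - 1 / x ≤ digamma x := log_sub_one_div_le_digamma h0
  have h_log : 0 ≤ Real.log x := log_nonneg h1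
  have h_inv : 1 / x ≤ 1 := (div_le_one h0).2 h1
  exact abs_le.2 ⟨by linarith, by linarith⟩

@[fun_prop]
lemma measurable_digamma : Measurable digamma :=
  measurable_deriv _

lemma tendsto_digamma_sub_log : Tendsto (fun x => digamma x - Real.log x) atTop (𝓝 0) := by
  have h_lower : Tendsto (fun x : ℝ => -(1 / x)) atTop (𝓝 0) := by
    simpa using (tendsto_inv_atTop_zero (𝕜 := ℝ)).neg
  refine tendsto_of_tendsto_of_tendsto_of_le_of_le' h_lower tendsto_const_nhds ?_ ?_
  · filter_upwards [eventually_gt_atTop 0] with x hx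
    linarith [log_sub_one_div_le_digamma hx]
  · filter_upwards [eventually_gt_atTop 0] with x hx
    linarith [digamma_le_log hx]

lemma eq_of_add_one_eq_of_tendsto {α : Type*} [TopologicalSpace α] [T2Space α] {f : ℝ → α}
    {c : α} (hf : ∀ y, 0 < y → f (y + 1) = f y) (hlim : Tendsto f atTop (𝓝 c)) {y : ℝ}
    (hy : 0 < y) : f y = c := by
  have h_shift (n : ℕ) : f (y + n) = f y := by
    induction n with
    | zero => simp
    | succ n ih => rw [Nat.cast_succ, ← add_assoc, hf _ (by positivity), ih]
  have h_lim : Tendsto (fun n : ℕ => f (y + n)) atTop (𝓝 c) :=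
    hlim.comp (tendsto_atTop_add_const_left _ _ tendsto_natCast_atTop_atTop)
  simp only [h_shift] at h_lim
  exact tendsto_nhds_unique tendsto_const_nhds h_lim

lemma sum_digamma_div_add_one {b : ℕ} (hb : 0 < b) {y : ℝ} (hy : 0 < y) :
    ∑ a ∈ Finset.range b, digamma ((a + (y + 1)) / b) =
      ∑ a ∈ Finset.range b, digamma ((a + y) / b) + b / y := by
  have hb' : (0 : ℝ) < b := mod_cast hb
  let g (a : ℕ) := digamma ((a + y) / b)
  have h_wrap : g b = g 0 + b / y := by
    simp only [g, Nat.cast_zero, zero_add]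
    rw [add_div, div_self hb'.ne', add_comm, digamma_add_one (by positivity), one_div_div]
  calc ∑ a ∈ Finset.range b, digamma ((a + (y + 1)) / b)
      = ∑ a ∈ Finset.range b, g (a + 1) :=
        Finset.sum_congr rfl fun a _ => by simp only [g, Nat.cast_succ, add_assoc, add_comm y]
    _ = ∑ a ∈ Finset.range b, g a + g b - g 0 := by
        rw [eq_sub_iff_add_eq, ← Finset.sum_range_succ', Finset.sum_range_succ]
    _ = ∑ a ∈ Finset.range b, g a + b / y := by rw [h_wrap]; ring

lemma tendsto_digamma_div_sub_digamma {b : ℕ} (hb : 0 < b) (a : ℝ) :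
    Tendsto (fun y : ℝ => digamma ((a + y) / b) - digamma y + Real.log b) atTop (𝓝 0) := by
  have hb' : (0 : ℝ) < b := mod_cast hb
  have h_scaled :
      Tendsto (fun y : ℝ => digamma ((a + y) / b) - Real.log ((a + y) / b)) atTop (𝓝 0) :=
    tendsto_digamma_sub_log.comp
      ((tendsto_atTop_add_const_left _ _ tendsto_id).atTop_div_const hb')
  have h_lim := (h_scaled.sub tendsto_digamma_sub_log).add (tendsto_log_comp_add_sub_log a)
  rw [sub_zero, add_zero] at h_lim
  refine h_lim.congr' ?_
  filter_upwards [eventually_gt_atTop (-a)] with y hy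
  rw [log_div (by linarith) hb'.ne', add_comm y a]
  ring

/- Both sides change by the same amount under `y ↦ y + 1` and are asymptotic as `y → ∞`. -/
theorem sum_digamma_div {b : ℕ} (hb : 0 < b) {y : ℝ} (hy : 0 < y) :
    ∑ a ∈ Finset.range b, digamma ((a + y) / b) = b * digamma y - b * Real.log b := by
  let defect (y : ℝ) := ∑ a ∈ Finset.range b, (digamma ((a + y) / b) - digamma y + Real.log b)
  have h_defect (y : ℝ) : defect y =
      ∑ a ∈ Finset.range b, digamma ((a + y) / b) - b * digamma y + b * Real.log b := by
    simp [defect, Finset.sum_add_distrib]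
  have h_periodic (y : ℝ) (hy : 0 < y) : defect (y + 1) = defect y := by
    rw [h_defect, h_defect, sum_digamma_div_add_one hb hy, digamma_add_one hy]
    ring
  have h_lim : Tendsto defect atTop (𝓝 0) := by
    simpa using tendsto_finsetSum (Finset.range b) fun (a : ℕ) _ =>
      tendsto_digamma_div_sub_digamma hb a
  linarith [h_defect y, eq_of_add_one_eq_of_tendsto h_periodic h_lim hy]

end Digamma

section DigitStrings

lemma concat_injective {α : Type*} : (fun p : List α × α => p.1 ++ [p.2]).Injective :=
  fun _ _ h => Prod.ext_iff.2 (List.append_singleton_inj.1 h)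

lemma tsum_list_eq_nil_add_tsum_concat {α : Type*} (f : List α → ℝ≥0∞) :
    ∑' l, f l = f [] + ∑' (l : List α) (a : α), f (l ++ [a]) := by
  classical
  rw [ENNReal.summable.tsum_eq_add_tsum_ite' [], ← ENNReal.tsum_prod, ← concat_injective.tsum_eq]
  · simp
  · intro l hl
    rcases l.eq_nil_or_concat with rfl | ⟨m, a, rfl⟩
    · simp at hl
    · exact ⟨(m, a), by simp⟩

lemma tsum_pow_length {α : Type*} [Fintype α] (r : ℝ≥0∞) :
    ∑' l : List α, r ^ l.length = (1 - Fintype.card α * r)⁻¹ := by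
  rw [← List.equivSigmaTuple.symm.tsum_eq, ENNReal.tsum_sigma', ← ENNReal.tsum_geometric]
  simp [mul_pow]

/-- The base-`b` digits outside `E`; the set `A` of the informal statement. -/
def allowedDigits (b : ℕ) (E : Finset ℕ) : Finset ℕ :=
  Finset.range b \ E

/-- The point `x(X) ∈ [0,1)` attached to a digit string `X`. As in `Nat.ofDigits`, the leading
digit of `X` is the last entry of the list. -/
noncomputable def digitPoint (b : ℕ) (l : List ℕ) : ℝ :=
  ((Nat.ofDigits b l : ℕ) : ℝ) / (b : ℝ) ^ l.length

variable {b : ℕ} {E : Finset ℕ}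

lemma mem_allowedDigits {a : ℕ} : a ∈ allowedDigits b E ↔ a < b ∧ a ∉ E := by
  simp [allowedDigits]

lemma sum_allowedDigits_add_sum {M : Type*} [AddCommMonoid M] (hE : ∀ d ∈ E, d < b) (f : ℕ → M) :
    ∑ a ∈ allowedDigits b E, f a + ∑ a ∈ E, f a = ∑ a ∈ Finset.range b, f a :=
  Finset.sum_sdiff fun d hd => Finset.mem_range.2 (hE d hd)

lemma card_allowedDigits_add_card (hE : ∀ d ∈ E, d < b) :
    (allowedDigits b E).card + E.card = b := by
  simpa using sum_allowedDigits_add_sum hE fun _ => (1 : ℕ)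

lemma digitPoint_nil : digitPoint b [] = 0 := by
  simp [digitPoint]

lemma ofDigits_eq_pow_mul_digitPoint (hb : b ≠ 0) (l : List ℕ) :
    (Nat.ofDigits b l : ℕ) = (b : ℝ) ^ l.length * digitPoint b l := by
  rw [digitPoint]
  field_simp

lemma ofDigits_concat (hb : b ≠ 0) (l : List ℕ) (a : ℕ) :
    (Nat.ofDigits b (l ++ [a]) : ℕ) = (b : ℝ) ^ l.length * (a + digitPoint b l) := by
  rw [Nat.ofDigits_append, Nat.ofDigits_singleton, Nat.cast_add, Nat.cast_mul, Nat.cast_pow,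
    ofDigits_eq_pow_mul_digitPoint hb]
  ring

lemma digitPoint_concat (hb : b ≠ 0) (l : List ℕ) (a : ℕ) :
    digitPoint b (l ++ [a]) = (a + digitPoint b l) / b := by
  rw [digitPoint, ofDigits_concat hb, List.length_append, List.length_singleton]
  field_simp
  ring

lemma digitPoint_mem_Ico (hb : 1 < b) {l : List ℕ} (hl : ∀ d ∈ l, d < b) :
    digitPoint b l ∈ Ico (0 : ℝ) 1 := by
  refine ⟨by unfold digitPoint; positivity, (div_lt_one (by positivity)).2 ?_⟩
  exact_mod_cast Nat.ofDigits_lt_base_pow_length hb hl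

/-- Strings over the alphabet of allowed digits, identified with the strings of natural numbers
that index the Dirac masses of `kempnerMeasure`. -/
def digitStringEquiv :
    List (allowedDigits b E) ≃ {l : List ℕ // ∀ d ∈ l, d < b ∧ d ∉ E} where
  toFun l := ⟨l.map (↑), by simp +contextual [mem_allowedDigits]⟩
  invFun X := X.1.attachWith _ fun d hd => mem_allowedDigits.2 (X.2 d hd)
  left_inv l := List.map_injective_iff.2 Subtype.val_injective (by simp)
  right_inv X := by simp

end DigitStrings

section KempnerMeasure

variable {b : ℕ} {E : Finset ℕ}

lemma kempnerMeasure_eq_sum : kempnerMeasure b E = Measure.sum fun l : List (allowedDigits b E) =>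
    (b : ℝ≥0∞)⁻¹ ^ l.length • Measure.dirac (digitPoint b (l.map (↑))) := by
  rw [kempnerMeasure, ← Measure.sum_comp_equiv digitStringEquiv]
  simp [digitStringEquiv, digitPoint, ENNReal.inv_pow, Function.comp_def]

lemma lintegral_kempnerMeasure (f : ℝ → ℝ≥0∞) : ∫⁻ x, f x ∂kempnerMeasure b E =
    ∑' l : List (allowedDigits b E), (b : ℝ≥0∞)⁻¹ ^ l.length * f (digitPoint b (l.map (↑))) := by
  simp [kempnerMeasure_eq_sum, lintegral_sum_measure]

lemma ae_kempnerMeasure_mem_Ico (hb : 1 < b) : ∀ᵐ x ∂kempnerMeasure b E, x ∈ Ico (0 : ℝ) 1 := by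
  refine Measure.ae_sum_iff.2 fun X => Measure.ae_smul_measure ?_ _
  exact (ae_dirac_iff measurableSet_Ico).2 (digitPoint_mem_Ico hb fun d hd => (X.2 d hd).1)

lemma kempnerMeasure_univ (hb : b ≠ 0) (hE : ∀ d ∈ E, d < b) :
    kempnerMeasure b E univ = b / E.card := by
  have hb' : (b : ℝ≥0∞) ≠ 0 := by simpa
  have h_compl : 1 - ((allowedDigits b E).card : ℝ≥0∞) * (b : ℝ≥0∞)⁻¹ = E.card / b := by
    refine ENNReal.sub_eq_of_eq_add (by finiteness) ?_
    rw [div_eq_mul_inv, ← add_mul, ← Nat.cast_add, add_comm, card_allowedDigits_add_card hE,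
      ENNReal.mul_inv_cancel hb' (by simp)]
  rw [← lintegral_one, lintegral_kempnerMeasure]
  simp only [mul_one, tsum_pow_length, Fintype.card_coe]
  rw [h_compl, ENNReal.inv_div (by simp) (by simp [hb'])]

lemma isFiniteMeasure_kempnerMeasure (hb : b ≠ 0) (hE : E.Nonempty) (hEb : ∀ d ∈ E, d < b) :
    IsFiniteMeasure (kempnerMeasure b E) := by
  refine ⟨?_⟩
  rw [kempnerMeasure_univ hb hEb]
  exact ENNReal.div_lt_top (by simp) (by simpa using hE.ne_empty)

lemma kempnerMeasure_eq_dirac_add_sum_map : kempnerMeasure b E = Measure.dirac 0 +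
    ∑ a ∈ allowedDigits b E,
      (b : ℝ≥0∞)⁻¹ • (kempnerMeasure b E).map (fun x : ℝ => (a + x) / b) := by
  refine Measure.ext_of_lintegral _ fun f hf => ?_
  have h_point (l : List (allowedDigits b E)) (a : allowedDigits b E) :
      digitPoint b ((l ++ [a]).map (↑)) = (a + digitPoint b (l.map (↑))) / b := by
    simpa only [List.map_append, List.map_singleton] using
      digitPoint_concat (mem_allowedDigits.1 a.2).1.ne_bot (l.map (↑)) a
  calc ∫⁻ x, f x ∂kempnerMeasure b E
      = f 0 + ∑' (l : List (allowedDigits b E)) (a : allowedDigits b E),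
          (b : ℝ≥0∞)⁻¹ * ((b : ℝ≥0∞)⁻¹ ^ l.length * f ((a + digitPoint b (l.map (↑))) / b)) := by
        rw [lintegral_kempnerMeasure, tsum_list_eq_nil_add_tsum_concat]
        simp only [h_point, List.map_nil, digitPoint_nil, List.length_nil, pow_zero, one_mul,
          List.length_append, List.length_singleton, pow_succ', mul_assoc]
    _ = f 0 + ∑ a ∈ allowedDigits b E,
          (b : ℝ≥0∞)⁻¹ * ∫⁻ x, f ((a + x) / b) ∂kempnerMeasure b E := by
        simp_rw [lintegral_kempnerMeasure, ← ENNReal.tsum_mul_left, ← Finset.tsum_subtype]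
        rw [ENNReal.tsum_comm]
    _ = _ := by
        have h_map (a : ℕ) := lintegral_map (μ := kempnerMeasure b E) hf
          (g := fun x : ℝ => (a + x) / b) (by fun_prop)
        simp [lintegral_add_measure, lintegral_finsetSum_measure, h_map]

lemma integral_kempnerMeasure_eq_add_sum {f : ℝ → ℝ} (hf : Measurable f)
    (hint : Integrable f (kempnerMeasure b E)) :
    ∫ x, f x ∂kempnerMeasure b E =
      f 0 + ∑ a ∈ allowedDigits b E, (b : ℝ)⁻¹ * ∫ x, f ((a + x) / b) ∂kempnerMeasure b E := by
  have h_map (a : ℕ) := integral_map (μ := kempnerMeasure b E)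
    (φ := fun x : ℝ => (a + x) / b) (by fun_prop) hf.aestronglyMeasurable
  have h_int := hint
  rw [kempnerMeasure_eq_dirac_add_sum_map, integrable_add_measure,
    integrable_finsetSum_measure] at h_int
  conv_lhs => rw [kempnerMeasure_eq_dirac_add_sum_map]
  rw [integral_add_measure h_int.1 (integrable_finsetSum_measure.2 h_int.2),
    integral_finsetSum_measure h_int.2]
  simp [h_map]

end KempnerMeasure

section KempnerSum

variable {b : ℕ} {E : Finset ℕ}

/-- The positive integer whose base-`b` expansion has leading digit `p.2 ≠ 0`, followed by the
string `p.1`. -/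
def ofLeadingDigit (b : ℕ) (E : Finset ℕ)
    (p : List (allowedDigits b E) × (allowedDigits b E).erase 0) : ℕ :=
  Nat.ofDigits b (p.1.map (↑) ++ [(p.2 : ℕ)])

lemma digits_ofLeadingDigit (hb : 1 < b)
    (p : List (allowedDigits b E) × (allowedDigits b E).erase 0) :
    Nat.digits b (ofLeadingDigit b E p) = p.1.map (↑) ++ [(p.2 : ℕ)] := by
  obtain ⟨l, a, ha⟩ := p
  obtain ⟨ha0, haA⟩ := Finset.mem_erase.1 ha
  refine Nat.digits_ofDigits b hb _ (fun d hd => ?_) fun _ => by simpa using ha0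
  rcases List.mem_append.1 hd with hd | hd
  · obtain ⟨c, -, rfl⟩ := List.mem_map.1 hd
    exact (mem_allowedDigits.1 c.2).1
  · exact List.mem_singleton.1 hd ▸ (mem_allowedDigits.1 haA).1

lemma ofLeadingDigit_injective (hb : 1 < b) : (ofLeadingDigit b E).Injective := by
  intro p q h
  have h_digits := congrArg (Nat.digits b) h
  rw [digits_ofLeadingDigit hb, digits_ofLeadingDigit hb, List.append_singleton_inj] at h_digits
  exact Prod.ext (List.map_injective_iff.2 Subtype.val_injective h_digits.1)
    (Subtype.ext h_digits.2)

lemma range_ofLeadingDigit (hb : 1 < b) :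
    range (ofLeadingDigit b E) = {n | n ≠ 0 ∧ ∀ d ∈ Nat.digits b n, d ∉ E} := by
  ext n
  constructor
  · rintro ⟨p, rfl⟩
    have h_digits := digits_ofLeadingDigit hb p
    refine ⟨fun h => by simp [h] at h_digits, fun d hd => ?_⟩
    rw [h_digits] at hd
    rcases List.mem_append.1 hd with hd | hd
    · obtain ⟨c, -, rfl⟩ := List.mem_map.1 hd
      exact (mem_allowedDigits.1 c.2).2
    · exact List.mem_singleton.1 hd ▸ (mem_allowedDigits.1 (Finset.mem_of_mem_erase p.2.2)).2
  · rintro ⟨hn, hd⟩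
    have h_mem : ∀ d ∈ Nat.digits b n, d ∈ allowedDigits b E := fun d h =>
      mem_allowedDigits.2 ⟨Nat.digits_lt_base hb h, hd d h⟩
    have h_ne : Nat.digits b n ≠ [] := Nat.digits_ne_nil_iff_ne_zero.2 hn
    let tail := (Nat.digits b n).dropLast.attachWith (· ∈ allowedDigits b E) fun d h =>
      h_mem d (List.mem_of_mem_dropLast h)
    let lead : (allowedDigits b E).erase 0 := ⟨(Nat.digits b n).getLast h_ne, Finset.mem_erase.2
      ⟨Nat.getLast_digit_ne_zero b hn, h_mem _ (List.getLast_mem h_ne)⟩⟩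
    refine ⟨(tail, lead), ?_⟩
    simp [ofLeadingDigit, tail, lead, List.dropLast_append_getLast, Nat.ofDigits_digits]

lemma kempnerSum_eq_toReal_tsum (hb : 1 < b) :
    kempnerSum b E = (∑' p, ENNReal.ofReal (ofLeadingDigit b E p : ℝ)⁻¹).toReal := by
  classical
  calc kempnerSum b E = ∑' p, (ofLeadingDigit b E p : ℝ)⁻¹ := by
        rw [← tsum_range (fun n : ℕ => (n : ℝ)⁻¹) (ofLeadingDigit_injective hb),
          range_ofLeadingDigit hb, tsum_subtype _ fun n : ℕ => (n : ℝ)⁻¹]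
        simp only [kempnerSum, indicator_apply, mem_ofPred_eq]
    _ = _ := by
        rw [ENNReal.tsum_toReal_eq fun _ => ENNReal.ofReal_ne_top]
        exact tsum_congr fun p => (ENNReal.toReal_ofReal (by positivity)).symm

lemma ofReal_inv_ofLeadingDigit (hb : 1 < b)
    (p : List (allowedDigits b E) × (allowedDigits b E).erase 0) :
    ENNReal.ofReal (ofLeadingDigit b E p : ℝ)⁻¹ = (b : ℝ≥0∞)⁻¹ ^ p.1.length *
      ENNReal.ofReal (1 / (p.2 + digitPoint b (p.1.map (↑)))) := by
  have hb' : (0 : ℝ) < b := by positivity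
  rw [ofLeadingDigit, ofDigits_concat (by positivity), mul_inv, List.length_map,
    ENNReal.ofReal_mul (by positivity), ← inv_pow, ENNReal.ofReal_pow (by positivity),
    ENNReal.ofReal_inv_of_pos hb', ENNReal.ofReal_natCast, one_div]

lemma kempnerSum_eq_integral (hb : 1 < b) : kempnerSum b E =
    ∫ x, ∑ a ∈ (allowedDigits b E).erase 0, 1 / (a + x) ∂kempnerMeasure b E := by
  have h_nonneg : 0 ≤ᵐ[kempnerMeasure b E]
      fun x => ∑ a ∈ (allowedDigits b E).erase 0, 1 / (a + x) := by
    filter_upwards [ae_kempnerMeasure_mem_Ico hb] with x hx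
    have := hx.1
    positivity
  have h_meas : Measurable fun x : ℝ => ∑ a ∈ (allowedDigits b E).erase 0, 1 / (a + x) := by
    fun_prop
  have h_fiber (l : List (allowedDigits b E)) :
      ∑' a, ENNReal.ofReal (ofLeadingDigit b E (l, a) : ℝ)⁻¹ = (b : ℝ≥0∞)⁻¹ ^ l.length *
        ENNReal.ofReal (∑ a ∈ (allowedDigits b E).erase 0, 1 / (a + digitPoint b (l.map (↑)))) := by
    rw [ENNReal.ofReal_sum_of_nonneg fun a _ => by unfold digitPoint; positivity,
      ← Finset.tsum_subtype, ← ENNReal.tsum_mul_left]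
    exact tsum_congr fun a => ofReal_inv_ofLeadingDigit hb (l, a)
  rw [integral_eq_lintegral_of_nonneg_ae h_nonneg h_meas.aestronglyMeasurable,
    lintegral_kempnerMeasure, kempnerSum_eq_toReal_tsum hb, ENNReal.tsum_prod',
    tsum_congr h_fiber]

end KempnerSum

section Reflection

/-- The base-`b` digit congruent to `-a` modulo `b`, for a digit `a`. -/
def negDigit (b a : ℕ) : ℕ :=
  if a = 0 then 0 else b - a

variable {b : ℕ} {E : Finset ℕ}

lemma negDigit_injOn : InjOn (negDigit b) (Finset.range b) := by
  intro a ha c hc h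
  grind [negDigit]

lemma image_negDigit_range : (Finset.range b).image (negDigit b) = Finset.range b := by
  refine Finset.eq_of_subset_of_card_le (fun d hd => ?_) ?_
  · obtain ⟨a, ha, rfl⟩ := Finset.mem_image.1 hd
    grind [negDigit]
  · rw [Finset.card_image_of_injOn negDigit_injOn]

lemma image_sub_Eone : (Eone b E).image (fun a => b - a) = E.image (negDigit b) := by
  have h_Eone : Eone b E = E.image fun a => if a = 0 then b else a := by
    ext d
    grind [Eone]
  rw [h_Eone, Finset.image_image]
  congr 1
  ext a
  by_cases ha : a = 0 <;> simp [negDigit, ha]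

variable {M : Type*} [AddCommMonoid M]

lemma sum_range_negDigit (f : ℕ → M) :
    ∑ a ∈ Finset.range b, f (negDigit b a) = ∑ d ∈ Finset.range b, f d := by
  rw [← Finset.sum_image negDigit_injOn, image_negDigit_range]

lemma sum_image_sub_Eone (hE : ∀ d ∈ E, d < b) (f : ℕ → M) :
    ∑ d ∈ (Eone b E).image (fun a => b - a), f d = ∑ a ∈ E, f (negDigit b a) := by
  rw [image_sub_Eone, Finset.sum_image (negDigit_injOn.mono fun a ha => by simpa using hE a ha)]

lemma card_image_sub_Eone (hE : ∀ d ∈ E, d < b) :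
    ((Eone b E).image (fun a => b - a)).card = E.card := by
  simpa using sum_image_sub_Eone hE fun _ => (1 : ℕ)

lemma digamma_one_sub_negDigit {a : ℕ} (ha : a < b) {x : ℝ} (hx : 0 ≤ x) :
    digamma (1 - (negDigit b a - x) / b) =
      digamma (1 + (a + x) / b) - if a = 0 then 0 else b / (a + x) := by
  have hb : (0 : ℝ) < b := mod_cast ha.pos
  rcases eq_or_ne a 0 with rfl | ha0
  · simp [negDigit, neg_div]
  · have h_arg : 1 - ((negDigit b a : ℝ) - x) / b = (a + x) / b := by
      rw [negDigit, if_neg ha0, Nat.cast_sub ha.le]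
      field_simp
      ring
    rw [h_arg, if_neg ha0, add_comm 1, digamma_add_one (by positivity), one_div_div]
    ring

lemma sum_range_digamma_one_sub (hb : 0 < b) {x : ℝ} (hx : -1 < x) :
    ∑ d ∈ Finset.range b, digamma (1 - (d - x) / b) = b * digamma (1 + x) - b * Real.log b := by
  have hb' : (b : ℝ) ≠ 0 := mod_cast hb.ne'
  rw [← sum_digamma_div hb (by linarith : 0 < 1 + x), ← Finset.sum_range_reflect]
  refine Finset.sum_congr rfl fun a ha => congrArg digamma ?_
  have h_cast : ((b - 1 - a : ℕ) : ℝ) = b - 1 - a := by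
    have := Finset.mem_range.1 ha
    push_cast [Nat.cast_sub (by omega : a ≤ b - 1), Nat.cast_sub (by omega : 1 ≤ b)]
    ring
  rw [h_cast]
  field_simp
  ring

lemma sum_digamma_image_sub_Eone (hb : 0 < b) (hE : ∀ d ∈ E, d < b) {x : ℝ} (hx : 0 ≤ x) :
    ∑ d ∈ (Eone b E).image (fun a => b - a), digamma (1 - (d - x) / b) =
      b * digamma (1 + x) - b * Real.log b - ∑ a ∈ allowedDigits b E, digamma (1 + (a + x) / b)
        + b * ∑ a ∈ (allowedDigits b E).erase 0, 1 / (a + x) := by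
  have h_allowed : ∑ a ∈ allowedDigits b E, digamma (1 - (negDigit b a - x) / b) =
      ∑ a ∈ allowedDigits b E, digamma (1 + (a + x) / b)
        - b * ∑ a ∈ (allowedDigits b E).erase 0, 1 / (a + x) := by
    rw [Finset.sum_congr rfl fun a ha =>
      digamma_one_sub_negDigit (mem_allowedDigits.1 ha).1 hx, Finset.sum_sub_distrib]
    simp [Finset.sum_ite, Finset.filter_ne', Finset.mul_sum, div_eq_mul_inv]
  have h_range := sum_allowedDigits_add_sum hE fun a => digamma (1 - (negDigit b a - x) / b)
  rw [sum_range_negDigit fun d => digamma (1 - (d - x) / b),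
    sum_range_digamma_one_sub hb (by linarith), h_allowed] at h_range
  rw [sum_image_sub_Eone hE fun d => digamma (1 - (d - x) / b)]
  linarith

lemma one_div_mul_sum_digamma_one_sub_digamma (hb : 0 < b) (hE : ∀ d ∈ E, d < b) {x : ℝ}
    (hx : 0 ≤ x) :
    1 / (b : ℝ) * ∑ d ∈ (Eone b E).image (fun a => b - a),
        (digamma 1 - digamma (1 - (d - x) / b)) =
      (E.card / b * digamma 1 + Real.log b)
        - (digamma (1 + x) - (b : ℝ)⁻¹ * ∑ a ∈ allowedDigits b E, digamma (1 + (a + x) / b))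
        - ∑ a ∈ (allowedDigits b E).erase 0, 1 / (a + x) := by
  have hb' : (b : ℝ) ≠ 0 := mod_cast hb.ne'
  rw [Finset.sum_sub_distrib, Finset.sum_const, card_image_sub_Eone hE, nsmul_eq_mul,
    sum_digamma_image_sub_Eone hb hE hx]
  field_simp
  ring

end Reflection

section Integration

variable {b : ℕ} {E : Finset ℕ} [IsFiniteMeasure (kempnerMeasure b E)]

lemma integrable_kempnerMeasure_of_bound (hb : 1 < b)
    {f : ℝ → ℝ} (hf : Measurable f) {C : ℝ} (hC : ∀ x ∈ Ico (0 : ℝ) 1, |f x| ≤ C) :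
    Integrable f (kempnerMeasure b E) :=
  .of_bound hf.aestronglyMeasurable C <| (ae_kempnerMeasure_mem_Ico hb).mono hC

lemma integrable_digamma_one_add (hb : 1 < b) :
    Integrable (fun x => digamma (1 + x)) (kempnerMeasure b E) :=
  integrable_kempnerMeasure_of_bound hb (by fun_prop) fun x hx =>
    abs_digamma_le_one ⟨by linarith [hx.1], by linarith [hx.2]⟩

lemma integrable_digamma_one_add_div (hb : 1 < b) {a : ℕ}
    (ha : a < b) : Integrable (fun x => digamma (1 + (a + x) / b)) (kempnerMeasure b E) := by
  refine integrable_kempnerMeasure_of_bound hb (by fun_prop) fun x hx => abs_digamma_le_one ?_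
  have hx0 : 0 ≤ x := hx.1
  have ha' : (a : ℝ) + 1 ≤ b := mod_cast ha
  have h_le : (a + x) / b ≤ 1 := div_le_one_of_le₀ (by linarith [hx.2]) (by positivity)
  exact ⟨le_add_of_nonneg_right (by positivity), by linarith⟩

lemma integrable_sum_one_div (hb : 1 < b) :
    Integrable (fun x : ℝ => ∑ a ∈ (allowedDigits b E).erase 0, 1 / (a + x))
      (kempnerMeasure b E) := by
  refine integrable_finsetSum _ fun a ha =>
    integrable_kempnerMeasure_of_bound hb (C := 1) (by fun_prop) fun x hx => ?_
  have hx0 : 0 ≤ x := hx.1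
  have ha1 : (1 : ℝ) ≤ a := mod_cast Nat.one_le_iff_ne_zero.2 (Finset.ne_of_mem_erase ha)
  rw [abs_of_nonneg (by positivity)]
  exact div_le_one_of_le₀ (by linarith) (by positivity)

lemma integrable_digamma_one_add_sub_sum (hb : 1 < b) :
    Integrable (fun x => digamma (1 + x)
      - (b : ℝ)⁻¹ * ∑ a ∈ allowedDigits b E, digamma (1 + (a + x) / b)) (kempnerMeasure b E) :=
  (integrable_digamma_one_add hb).sub <| .const_mul (integrable_finsetSum _ fun _ ha =>
    integrable_digamma_one_add_div hb (mem_allowedDigits.1 ha).1) _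

lemma integral_digamma_one_add_sub_sum (hb : 1 < b) :
    ∫ x, (digamma (1 + x) - (b : ℝ)⁻¹ * ∑ a ∈ allowedDigits b E, digamma (1 + (a + x) / b))
      ∂kempnerMeasure b E = digamma 1 := by
  have h_shifts (a : ℕ) (ha : a ∈ allowedDigits b E) :=
    integrable_digamma_one_add_div (E := E) hb (mem_allowedDigits.1 ha).1
  rw [integral_sub (integrable_digamma_one_add hb) ((integrable_finsetSum _ h_shifts).const_mul _),
    integral_const_mul, integral_finsetSum _ h_shifts,
    integral_kempnerMeasure_eq_add_sum (by fun_prop) (integrable_digamma_one_add hb),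
    Finset.mul_sum, add_zero, add_sub_cancel_right]

end Integration

theorem kempner_digamma_formula_reflected (b : ℕ) (hb : 2 ≤ b) (E : Finset ℕ)
    (hE : E.Nonempty) (hEsub : ∀ d ∈ E, d < b) :
    kempnerSum b E = ((b : ℝ) / E.card) * Real.log b -
      ∫ x in Set.Ico (0 : ℝ) 1,
        (1 / (b : ℝ)) * ∑ d ∈ (Eone b E).image (fun a => b - a),
          (digamma 1 - digamma (1 - ((d : ℝ) - x) / b))
        ∂(kempnerMeasure b E) := by
  have hb0 : (b : ℝ) ≠ 0 := by positivity
  have hE0 : (E.card : ℝ) ≠ 0 := mod_cast hE.card_pos.ne'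
  have h_finite := isFiniteMeasure_kempnerMeasure (by lia) hE hEsub
  have h_mass : (kempnerMeasure b E).real univ = b / E.card := by
    simp [measureReal_def, kempnerMeasure_univ (by lia : b ≠ 0) hEsub]
  have h_Ico := ae_kempnerMeasure_mem_Ico (E := E) hb
  have h_integrand := h_Ico.mono fun x hx =>
    one_div_mul_sum_digamma_one_sub_digamma (by lia) hEsub hx.1
  have h_defect := integrable_digamma_one_add_sub_sum (E := E) hb
  rw [Measure.restrict_eq_self_of_ae_mem h_Ico, integral_congr_ae h_integrand,
    integral_sub ((integrable_const _).sub' h_defect) (integrable_sum_one_div hb),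
    integral_sub (integrable_const _) h_defect, integral_digamma_one_add_sub_sum hb,
    ← kempnerSum_eq_integral hb, integral_const, h_mass, smul_eq_mul]
  field_simp
  ring
end
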